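/- arXiv:1206.5069 — 2 statements merged into one kernel-verified Lean document; each statement's English description precedes it below -/
import Mathlib

section
/- Under hypothesis (1.0), let λ* = inf{ D(f) : f absolutely continuous on [0,D], μ(f²) = 1, and f(D) = 0 } and λ̃₀ = inf{ D(f) : μ(f²) = 1, f ∈ C¹(0,D) ∩ C[0,D], and f(D) = 0 }. Then λ̃₀ = λ*. -/
/-!
The two infima agree because both inequalities come from an exchange of competitors.

For `λ* ≤ λ̃₀`, a `C¹` competitor of finite energy has `f' ∈ L²(0, p)`, since `e^C` is bounded
below on bounded intervals. Hence `f'` is integrable and the fundamental theorem of calculus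
makes `f` absolutely continuous (`nd_lower`).

For `λ̃₀ ≤ λ*`, let `f = f(0) + ∫ g` have finite energy `E`. Choose `p ↑ D` with `f(p) → 0`
(`p = D` if `D < ∞`). The function `f - f(p)` on `[0, p]`, extended by zero, has energy at most
`E`; approximating `g` in `L²(0, p)` by a continuous `h` vanishing on `[p, ∞)` replaces it by the
`C¹` function `F(x) = ∫_p^x h`, uniformly close to it and with energy at most `(1 + t) E + t`
(`nd_step`). By homogeneity `λ̃₀ μ(F²) ≤ D(F)` (`nd_homog`). As `t → 0` and `p ↑ D`, the functions
`F` converge pointwise to `f`, so Fatou's lemma gives `liminf μ(F²) ≥ μ(f²) = 1`, and `λ̃₀ ≤ E`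
follows (`nd_upper`). Since only a lower bound for `μ(F²)` is required, no domination is needed,
even when `μ` is infinite.
-/

open MeasureTheory Set Filter Topology ENNReal

noncomputable section

/-- The open interval `(0, D)` in `ℝ`, where `D : ℝ≥0∞` may be infinite. -/
def ooI (D : ℝ≥0∞) : Set ℝ := {x : ℝ | 0 < x ∧ ENNReal.ofReal x < D}

/-- The interval `[0, D)` in `ℝ`. -/
def coI (D : ℝ≥0∞) : Set ℝ := {x : ℝ | 0 ≤ x ∧ ENNReal.ofReal x < D}

/-- The interval `[0, D]` in `ℝ` (conventionally `[0, ∞)` when `D = ∞`). -/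
def ccI (D : ℝ≥0∞) : Set ℝ := {x : ℝ | 0 ≤ x ∧ ENNReal.ofReal x ≤ D}

/-- `C(x) = ∫_0^x b(u)/a(u) du`. -/
def Cf (a b : ℝ → ℝ) (x : ℝ) : ℝ := ∫ u in Set.Ioo 0 x, b u / a u

/-- The measure `μ(dx) = (e^{C(x)}/a(x)) dx` on `(0, D)`. -/
def muM (a b : ℝ → ℝ) (D : ℝ≥0∞) : Measure ℝ :=
  (volume.restrict (ooI D)).withDensity fun x => ENNReal.ofReal (Real.exp (Cf a b x) / a x)

/-- The measure `ν(dx) = e^{-C(x)} dx` on `(0, D)`. -/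
def nuM (a b : ℝ → ℝ) (D : ℝ≥0∞) : Measure ℝ :=
  (volume.restrict (ooI D)).withDensity fun x => ENNReal.ofReal (Real.exp (-Cf a b x))

/-- Hypothesis (1.0): `a`, `b` Borel measurable, `a > 0` on `(0,D)`, and `b/a`, `e^C/a`
locally integrable on `[0, D]`. -/
def Hyp (a b : ℝ → ℝ) (D : ℝ≥0∞) : Prop :=
  Measurable a ∧ Measurable b ∧ (∀ x ∈ ooI D, 0 < a x) ∧
    ∀ p : ℝ, 0 ≤ p → ENNReal.ofReal p ≤ D →
      IntegrableOn (fun u => b u / a u) (Set.Icc 0 p) ∧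
      IntegrableOn (fun u => Real.exp (Cf a b u) / a u) (Set.Icc 0 p)

/-- `f ∈ C¹(0,D) ∩ C[0,D]`. -/
def C1C (D : ℝ≥0∞) (f : ℝ → ℝ) : Prop :=
  ContinuousOn f (ccI D) ∧ (∀ x ∈ ooI D, DifferentiableAt ℝ f x) ∧
    ContinuousOn (deriv f) (ooI D)

/-- The Dirichlet form `D(f) = ∫_0^D e^{C} f'^2 dx`. -/
def Dform (a b : ℝ → ℝ) (D : ℝ≥0∞) (f : ℝ → ℝ) : ℝ≥0∞ :=
  ∫⁻ x in ooI D, ENNReal.ofReal (Real.exp (Cf a b x) * deriv f x ^ 2)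

/-- `μ(f²)`. -/
def muL2 (a b : ℝ → ℝ) (D : ℝ≥0∞) (f : ℝ → ℝ) : ℝ≥0∞ :=
  ∫⁻ x, ENNReal.ofReal (f x ^ 2) ∂(muM a b D)

/-- The ND (Neumann at `0`, Dirichlet at `D`) principal eigenvalue `λ₀`, defined with
compactly supported test functions. -/
def lam0 (a b : ℝ → ℝ) (D : ℝ≥0∞) : ℝ≥0∞ :=
  sInf {r | ∃ f : ℝ → ℝ, C1C D f ∧
    (∃ p : ℝ, 0 ≤ p ∧ ENNReal.ofReal p < D ∧ ∀ x, p < x → f x = 0) ∧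
    (D ≠ ∞ → f D.toReal = 0) ∧ muL2 a b D f = 1 ∧ r = Dform a b D f}

/-- `λ̃₀`: the infimum of `D(f)` over `f ∈ C¹(0,D) ∩ C[0,D]` with `μ(f²) = 1` and
`f(D) = 0` (interpreted as `lim_{x→D} f(x) = 0` when `D = ∞`). -/
def lam0til (a b : ℝ → ℝ) (D : ℝ≥0∞) : ℝ≥0∞ :=
  sInf {r | ∃ f : ℝ → ℝ, C1C D f ∧ muL2 a b D f = 1 ∧
    (D ≠ ∞ → f D.toReal = 0) ∧ (D = ∞ → Tendsto f atTop (nhds 0)) ∧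
    r = Dform a b D f}

/-- `λ*`: the same infimum taken over absolutely continuous functions on `[0,D]`,
i.e. over indefinite integrals `f(x) = f(0) + ∫_0^x g` of locally integrable `g`
(which serves as `f'`). -/
def lamStar (a b : ℝ → ℝ) (D : ℝ≥0∞) : ℝ≥0∞ :=
  sInf {r | ∃ f g : ℝ → ℝ,
    (∀ p : ℝ, 0 ≤ p → ENNReal.ofReal p ≤ D → IntegrableOn g (Set.Icc 0 p)) ∧
    (∀ x ∈ ccI D, f x = f 0 + ∫ u in Set.Ioo 0 x, g u) ∧
    muL2 a b D f = 1 ∧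
    (D ≠ ∞ → f D.toReal = 0) ∧ (D = ∞ → Tendsto f atTop (nhds 0)) ∧
    r = ∫⁻ x in ooI D, ENNReal.ofReal (Real.exp (Cf a b x) * g x ^ 2)}


/-! ### Intervals, weights and unweighted square-integrability -/

lemma nd_ioo_subset {D : ℝ≥0∞} {p : ℝ} (hp : ENNReal.ofReal p ≤ D) : Ioo 0 p ⊆ ooI D := by
  intro x hx
  exact ⟨hx.1, lt_of_lt_of_le ((ENNReal.ofReal_lt_ofReal_iff (hx.1.trans hx.2)).2 hx.2) hp⟩

lemma nd_icc_subset {D : ℝ≥0∞} {p : ℝ} (hp : ENNReal.ofReal p ≤ D) : Icc 0 p ⊆ ccI D := by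
  intro x hx
  exact ⟨hx.1, (ENNReal.ofReal_le_ofReal hx.2).trans hp⟩

lemma nd_measurableSet_ooI (D : ℝ≥0∞) : MeasurableSet (ooI D) :=
  measurableSet_Ioi.inter (ENNReal.measurable_ofReal measurableSet_Iio)

lemma nd_Cf_bound {a b : ℝ → ℝ} {p : ℝ}
    (h : IntegrableOn (fun u => b u / a u) (Icc 0 p)) :
    ∃ K : ℝ, ∀ x ∈ Icc 0 p, |Cf a b x| ≤ K := by
  refine ⟨∫ u in Icc 0 p, ‖b u / a u‖, fun x hx => ?_⟩
  have hsub : Ioo 0 x ⊆ Icc 0 p := fun u hu => ⟨hu.1.le, hu.2.le.trans hx.2⟩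
  rw [← Real.norm_eq_abs, Cf]
  refine (norm_integral_le_integral_norm _).trans ?_
  exact setIntegral_mono_set h.norm (ae_of_all _ fun _ => norm_nonneg _) hsub.eventuallyLE

/-- On bounded intervals `e^C` is bounded above and below, so the unweighted `L²` norm is
controlled by the energy. -/
lemma nd_weight_bound {a b : ℝ → ℝ} {p : ℝ}
    (h : IntegrableOn (fun u => b u / a u) (Icc 0 p)) :
    ∃ M : ℝ, 0 < M ∧ ∀ x ∈ Icc 0 p, Real.exp (Cf a b x) ≤ M ∧ 1 ≤ M * Real.exp (Cf a b x) := by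
  obtain ⟨K, hK⟩ := nd_Cf_bound h
  refine ⟨Real.exp K, Real.exp_pos _, fun x hx => ?_⟩
  have := abs_le.1 (hK x hx)
  refine ⟨Real.exp_le_exp.2 this.2, ?_⟩
  rw [← Real.exp_add]
  exact Real.one_le_exp (by linarith)

lemma nd_sq_finite {a b : ℝ → ℝ} {D : ℝ≥0∞} {p : ℝ} (hp : ENNReal.ofReal p ≤ D)
    (h : IntegrableOn (fun u => b u / a u) (Icc 0 p)) {g : ℝ → ℝ}
    (hE : ∫⁻ x in ooI D, ENNReal.ofReal (Real.exp (Cf a b x) * g x ^ 2) ≠ ∞) :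
    ∫⁻ x in Ioo 0 p, ENNReal.ofReal (g x ^ 2) < ∞ := by
  obtain ⟨M, hM, hb⟩ := nd_weight_bound h
  calc ∫⁻ x in Ioo 0 p, ENNReal.ofReal (g x ^ 2)
      ≤ ∫⁻ x in Ioo 0 p, ENNReal.ofReal M * ENNReal.ofReal (Real.exp (Cf a b x) * g x ^ 2) := by
        refine setLIntegral_mono' measurableSet_Ioo fun x hx => ?_
        rw [← ENNReal.ofReal_mul hM.le]
        refine ENNReal.ofReal_le_ofReal ?_
        have := (hb x ⟨hx.1.le, hx.2.le⟩).2
        nlinarith [mul_le_mul_of_nonneg_right this (sq_nonneg (g x))]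
    _ = ENNReal.ofReal M * ∫⁻ x in Ioo 0 p, ENNReal.ofReal (Real.exp (Cf a b x) * g x ^ 2) :=
        lintegral_const_mul' _ _ ENNReal.ofReal_ne_top
    _ ≤ ENNReal.ofReal M * ∫⁻ x in ooI D, ENNReal.ofReal (Real.exp (Cf a b x) * g x ^ 2) := by
        gcongr
        exact nd_ioo_subset hp
    _ < ∞ := ENNReal.mul_lt_top ENNReal.ofReal_lt_top hE.lt_top

lemma nd_eLpNorm_sq (μ : Measure ℝ) (u : ℝ → ℝ) :
    ∫⁻ x, ENNReal.ofReal (u x ^ 2) ∂μ = eLpNorm u 2 μ ^ 2 := by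
  have := eLpNorm_nnreal_pow_eq_lintegral (f := u) (μ := μ) (p := 2) two_ne_zero
  simp only [NNReal.coe_ofNat, ENNReal.coe_ofNat, ENNReal.rpow_ofNat] at this
  rw [this]
  refine lintegral_congr fun x => ?_
  rw [← sq_abs, ENNReal.ofReal_pow (abs_nonneg _), Real.enorm_eq_ofReal_abs]

lemma nd_integrable_of_sq {g : ℝ → ℝ} {p : ℝ}
    (hm : AEStronglyMeasurable g (volume.restrict (Ioo 0 p)))
    (h : ∫⁻ x in Ioo 0 p, ENNReal.ofReal (g x ^ 2) < ∞) :
    MemLp g 2 (volume.restrict (Ioo 0 p)) := by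
  refine ⟨hm, ?_⟩
  rw [nd_eLpNorm_sq] at h
  by_contra hc
  rw [not_lt, top_le_iff] at hc
  simp [hc] at h

/-! ### Approximation in `L²(0, p)` -/

/-- Continuous functions vanishing on `[p, ∞)` are dense in `L²(0, p)`: a continuous
approximation is multiplied by a cut-off which differs from `1` only on a short interval
next to `p`. -/
lemma nd_approx {g : ℝ → ℝ} {p : ℝ} (hg : MemLp g 2 (volume.restrict (Ioo 0 p)))
    {s : ℝ} (hs : 0 < s) :
    ∃ h : ℝ → ℝ, Continuous h ∧ (∀ x, p ≤ x → h x = 0) ∧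
      ∫⁻ x in Ioo 0 p, ENNReal.ofReal ((h x - g x) ^ 2) ≤ ENNReal.ofReal (s ^ 2) := by
  have hs2 : 0 < s / 2 := by positivity
  obtain ⟨k, -, hk, hkc, hkL⟩ := hg.exists_hasCompactSupport_eLpNorm_sub_le (by simp)
    (ε := ENNReal.ofReal (s / 2)) (by simpa using hs)
  obtain ⟨δ, hδ, hδk⟩ := hkL.eLpNorm_indicator_le (by norm_num) (by simp) hs2
  let χ : ℝ → ℝ := fun x => min 1 (max 0 ((p - x) / δ))
  have hχc : Continuous χ := by fun_prop
  have hχ0 : ∀ x, 0 ≤ χ x := fun x => le_min zero_le_one (le_max_left _ _)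
  have hχ1 : ∀ x, χ x ≤ 1 := fun x => min_le_left _ _
  refine ⟨fun x => χ x * k x, hχc.mul hkc, fun x hx => ?_, ?_⟩
  · have : (p - x) / δ ≤ 0 := div_nonpos_of_nonpos_of_nonneg (by linarith) hδ.le
    simp [χ, max_eq_left this]
  have hcut : eLpNorm (fun x => χ x * k x - k x) 2 (volume.restrict (Ioo 0 p))
      ≤ ENNReal.ofReal (s / 2) := by
    refine le_trans ?_ (hδk (Ioo (p - δ) p) measurableSet_Ioo ?_)
    · refine eLpNorm_mono_ae ?_
      filter_upwards [ae_restrict_mem measurableSet_Ioo] with x hx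
      by_cases hxd : p - δ < x
      · rw [indicator_of_mem (show x ∈ Ioo (p - δ) p from ⟨hxd, hx.2⟩)]
        rw [show χ x * k x - k x = -((1 - χ x) * k x) by ring, norm_neg, norm_mul]
        refine mul_le_of_le_one_left (norm_nonneg _) ?_
        rw [Real.norm_eq_abs, abs_le]
        constructor <;> linarith [hχ0 x, hχ1 x]
      · have h1 : 1 ≤ (p - x) / δ := by
          rw [le_div_iff₀ hδ]; linarith
        have : χ x = 1 := min_eq_left (h1.trans (le_max_right _ _))
        simp [this]
    · refine (Measure.restrict_apply_le _ _).trans ?_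
      simp
  have htot : eLpNorm (fun x => χ x * k x - g x) 2 (volume.restrict (Ioo 0 p))
      ≤ ENNReal.ofReal s := by
    have e : (fun x => χ x * k x - g x) = (fun x => χ x * k x - k x) - (g - k) := by
      ext x; simp
    rw [e]
    refine (eLpNorm_sub_le ?_ (hg.1.sub hkL.1) (by norm_num)).trans ?_
    · exact ((hχc.mul hkc).sub hkc).aestronglyMeasurable
    · refine (add_le_add hcut hk).trans ?_
      rw [← ENNReal.ofReal_add hs2.le hs2.le, add_halves]
  rw [nd_eLpNorm_sq, ENNReal.ofReal_pow hs.le]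
  gcongr

/-- An explicit form of `L² ⊆ L¹` on `(0, p)`, from `|u| ≤ s + u² / s`. -/
lemma nd_l1_le {u : ℝ → ℝ} {p s : ℝ} (hs : 0 < s)
    (h : ∫⁻ x in Ioo 0 p, ENNReal.ofReal (u x ^ 2) ≤ ENNReal.ofReal (s ^ 2)) (hp : 0 < p) :
    ∫⁻ x in Ioo 0 p, ENNReal.ofReal ‖u x‖ ≤ ENNReal.ofReal (s * (p + 1)) := by
  calc ∫⁻ x in Ioo 0 p, ENNReal.ofReal ‖u x‖
      ≤ ∫⁻ x in Ioo 0 p, (ENNReal.ofReal s + ENNReal.ofReal (1 / s) * ENNReal.ofReal (u x ^ 2)) := by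
        refine lintegral_mono fun x => ?_
        rw [← ENNReal.ofReal_mul (by positivity), ← ENNReal.ofReal_add hs.le (by positivity)]
        refine ENNReal.ofReal_le_ofReal ?_
        rw [Real.norm_eq_abs, ← sq_abs]
        have : s + 1 / s * |u x| ^ 2 - |u x| = ((s - |u x|) ^ 2 + s * |u x|) / s := by
          field_simp; ring
        have : 0 ≤ ((s - |u x|) ^ 2 + s * |u x|) / s := by positivity
        linarith
    _ = ENNReal.ofReal s * ENNReal.ofReal p
        + ENNReal.ofReal (1 / s) * ∫⁻ x in Ioo 0 p, ENNReal.ofReal (u x ^ 2) := by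
        rw [lintegral_add_left measurable_const, lintegral_const_mul' _ _ ENNReal.ofReal_ne_top]
        simp
    _ ≤ ENNReal.ofReal s * ENNReal.ofReal p + ENNReal.ofReal (1 / s) * ENNReal.ofReal (s ^ 2) := by
        gcongr
    _ = ENNReal.ofReal (s * (p + 1)) := by
        rw [← ENNReal.ofReal_mul hs.le, ← ENNReal.ofReal_mul (by positivity),
          ← ENNReal.ofReal_add (by positivity) (by positivity)]
        congr 1
        field_simp

/-! ### Homogeneity and `C¹` competitors vanishing on `[p, ∞)` -/

/-- The variational inequality `λ̃₀ μ(F²) ≤ D(F)` without normalization. -/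
lemma nd_homog {a b : ℝ → ℝ} {D : ℝ≥0∞} {F : ℝ → ℝ} (hF : C1C D F)
    (h0 : D ≠ ∞ → F D.toReal = 0) (h1 : D = ∞ → Tendsto F atTop (nhds 0))
    (hfin : muL2 a b D F ≠ ∞) : lam0til a b D * muL2 a b D F ≤ Dform a b D F := by
  by_cases hz : muL2 a b D F = 0
  · simp [hz]
  set m := muL2 a b D F with hm
  have hmpos : 0 < m.toReal := ENNReal.toReal_pos hz hfin
  set c : ℝ := 1 / Real.sqrt m.toReal with hc
  have hc2 : c ^ 2 = m.toReal⁻¹ := by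
    rw [hc, div_pow, Real.sq_sqrt hmpos.le, one_pow, one_div]
  have hcm : ENNReal.ofReal (c ^ 2) * m = 1 := by
    rw [hc2, ENNReal.ofReal_inv_of_pos hmpos, ENNReal.ofReal_toReal hfin]
    exact ENNReal.inv_mul_cancel hz hfin
  have hder : deriv (fun x => c * F x) = fun x => c * deriv F x := by
    ext x; exact deriv_const_mul_field c
  have hmu : muL2 a b D (fun x => c * F x) = ENNReal.ofReal (c ^ 2) * m := by
    rw [hm, muL2, muL2, ← lintegral_const_mul' _ _ ENNReal.ofReal_ne_top]
    refine lintegral_congr fun x => ?_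
    rw [← ENNReal.ofReal_mul (sq_nonneg _), mul_pow]
  have hDF : Dform a b D (fun x => c * F x) = ENNReal.ofReal (c ^ 2) * Dform a b D F := by
    rw [Dform, Dform, ← lintegral_const_mul' _ _ ENNReal.ofReal_ne_top, hder]
    refine lintegral_congr fun x => ?_
    rw [← ENNReal.ofReal_mul (sq_nonneg _)]
    congr 1; ring
  have key : lam0til a b D ≤ ENNReal.ofReal (c ^ 2) * Dform a b D F := by
    refine sInf_le ⟨fun x => c * F x, ⟨?_, ?_, ?_⟩, hmu.trans hcm, ?_, ?_, hDF.symm⟩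
    · exact continuousOn_const.mul hF.1
    · exact fun x hx => (hF.2.1 x hx).const_mul c
    · rw [hder]; exact continuousOn_const.mul hF.2.2
    · intro h; simp [h0 h]
    · intro h; simpa using (h1 h).const_mul c
  calc lam0til a b D * m ≤ ENNReal.ofReal (c ^ 2) * Dform a b D F * m := by gcongr
    _ = (ENNReal.ofReal (c ^ 2) * m) * Dform a b D F := by ring
    _ = Dform a b D F := by rw [hcm, one_mul]

lemma nd_muL2_finite {a b : ℝ → ℝ} {D : ℝ≥0∞} {p : ℝ} {F : ℝ → ℝ}
    (hint : IntegrableOn (fun u => Real.exp (Cf a b u) / a u) (Icc 0 p))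
    (hF : Continuous F) (hF0 : ∀ x, p ≤ x → F x = 0) : muL2 a b D F < ∞ := by
  obtain ⟨K, hK⟩ := (isCompact_Icc (a := (0 : ℝ)) (b := p)).exists_bound_of_continuousOn
    hF.continuousOn
  have hden : muM a b D (Iic p) < ∞ := by
    rw [muM, withDensity_apply _ measurableSet_Iic, Measure.restrict_restrict measurableSet_Iic]
    refine lt_of_le_of_lt (lintegral_mono_set (t := Icc 0 p) ?_) hint.lintegral_lt_top
    exact fun x hx => ⟨hx.2.1.le, hx.1⟩
  have hpos : ∀ᵐ x ∂(muM a b D), x ∈ ooI D :=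
    (withDensity_absolutelyContinuous _ _).ae_le (ae_restrict_mem (nd_measurableSet_ooI D))
  calc muL2 a b D F
      ≤ ∫⁻ x, (Iic p).indicator (fun _ => ENNReal.ofReal (K ^ 2)) x ∂(muM a b D) := by
        refine lintegral_mono_ae ?_
        filter_upwards [hpos] with x hx
        by_cases hxp : x ≤ p
        · rw [indicator_of_mem (show x ∈ Iic p from hxp)]
          refine ENNReal.ofReal_le_ofReal ?_
          have := hK x ⟨hx.1.le, hxp⟩
          rw [← sq_abs]
          exact pow_le_pow_left₀ (abs_nonneg _) this 2
        · simp [hF0 x (not_le.1 hxp).le]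
    _ = ENNReal.ofReal (K ^ 2) * muM a b D (Iic p) := by
        rw [lintegral_indicator measurableSet_Iic, setLIntegral_const]
    _ < ∞ := ENNReal.mul_lt_top ENNReal.ofReal_lt_top hden

/-- Smoothing and truncation at `p`: the competitor `f - f(p)` on `[0, p]`, extended by zero, is
uniformly approximated by a `C¹` function vanishing on `[p, ∞)` with almost no more energy
than `f`. The approximant is `x ↦ ∫_p^x h` with `h` continuous and close to `g` in `L²(0, p)`. -/
lemma nd_step {a b : ℝ → ℝ} {D : ℝ≥0∞} {p : ℝ} (hp0 : 0 < p) (hp : ENNReal.ofReal p ≤ D)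
    (hba : IntegrableOn (fun u => b u / a u) (Icc 0 p)) {f g : ℝ → ℝ}
    (hg : IntegrableOn g (Icc 0 p))
    (hf : ∀ x ∈ ccI D, f x = f 0 + ∫ u in Ioo 0 x, g u)
    (hE : ∫⁻ x in ooI D, ENNReal.ofReal (Real.exp (Cf a b x) * g x ^ 2) ≠ ∞)
    {t : ℝ} (ht : 0 < t) :
    ∃ F : ℝ → ℝ, Continuous F ∧ C1C D F ∧ (∀ x, p ≤ x → F x = 0) ∧
      (∀ x ∈ Icc 0 p, |F x - (f x - f p)| ≤ t) ∧
      Dform a b D F ≤ ENNReal.ofReal (1 + t) *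
        (∫⁻ x in ooI D, ENNReal.ofReal (Real.exp (Cf a b x) * g x ^ 2)) + ENNReal.ofReal t := by
  obtain ⟨M, hM, hb⟩ := nd_weight_bound hba
  have hgo : IntegrableOn g (Ioo 0 p) := hg.mono_set Ioo_subset_Icc_self
  have hgL := nd_integrable_of_sq hgo.1 (nd_sq_finite hp hba hE)
  set L : ℝ := (1 + 1 / t) * M with hL
  have hLpos : 0 < L := by positivity
  set s : ℝ := min 1 (min (t / (p + 1)) (t / L)) with hs
  have hspos : 0 < s := by positivity
  have hs1 : s ≤ 1 := min_le_left _ _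
  have hs2 : s * (p + 1) ≤ t := by
    rw [← le_div_iff₀ (by positivity)]
    exact (min_le_right _ _).trans (min_le_left _ _)
  have hs3 : L * s ^ 2 ≤ t := by
    have : s * L ≤ t := by
      rw [← le_div_iff₀ hLpos]
      exact (min_le_right _ _).trans (min_le_right _ _)
    have : s ^ 2 ≤ s := by nlinarith
    nlinarith
  obtain ⟨h, hhc, hh0, hhg⟩ := nd_approx hgL hspos
  have hder : ∀ x, HasDerivAt (fun x => ∫ u in p..x, h u) (h x) x := fun x =>
    intervalIntegral.integral_hasDerivAt_right (hhc.intervalIntegrable _ _)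
      hhc.aestronglyMeasurable.stronglyMeasurableAtFilter hhc.continuousAt
  have hder' : deriv (fun x => ∫ u in p..x, h u) = h := funext fun x => (hder x).deriv
  have hcont : Continuous (fun x => ∫ u in p..x, h u) :=
    continuous_iff_continuousAt.2 fun x => (hder x).continuousAt
  refine ⟨fun x => ∫ u in p..x, h u, hcont, ⟨hcont.continuousOn,
    fun x _ => (hder x).differentiableAt, ?_⟩, ?_, ?_, ?_⟩
  · rw [hder']; exact hhc.continuousOn
  · intro x hx
    refine intervalIntegral.integral_zero_ae (ae_of_all _ fun u hu => hh0 u ?_)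
    rw [uIoc_of_le hx] at hu
    exact hu.1.le
  · intro x hx
    have hgi : ∀ y ∈ Icc 0 p, IntervalIntegrable g volume 0 y := fun y hy => by
      rw [intervalIntegrable_iff_integrableOn_Icc_of_le hy.1]
      exact hg.mono_set (Icc_subset_Icc_right hy.2)
    have hfy : ∀ y ∈ Icc 0 p, f y = f 0 + ∫ u in (0 : ℝ)..y, g u := fun y hy => by
      rw [hf y (nd_icc_subset hp hy), intervalIntegral.integral_of_le hy.1,
        integral_Ioc_eq_integral_Ioo]
    have hpp : p ∈ Icc 0 p := ⟨hp0.le, le_rfl⟩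
    have hgpx : IntervalIntegrable g volume p x := (hgi p hpp).symm.trans (hgi x hx)
    have e1 : f x - f p = ∫ u in p..x, g u := by
      rw [hfy x hx, hfy p hpp, add_sub_add_left_eq_sub]
      exact intervalIntegral.integral_interval_sub_left (hgi x hx) (hgi p hpp)
    have e2 : (∫ u in p..x, h u) - (f x - f p) = ∫ u in p..x, (h u - g u) := by
      rw [e1, intervalIntegral.integral_sub (hhc.intervalIntegrable _ _) hgpx]
    have hfull := nd_l1_le hspos hhg hp0
    simp only
    rw [e2, intervalIntegral.integral_of_ge hx.2, abs_neg, integral_Ioc_eq_integral_Ioo,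
      ← Real.norm_eq_abs]
    refine (norm_integral_le_lintegral_norm _).trans ?_
    refine ENNReal.toReal_le_of_le_ofReal ht.le ?_
    refine (lintegral_mono_set (Ioo_subset_Ioo_left hx.1)).trans (hfull.trans ?_)
    exact ENNReal.ofReal_le_ofReal hs2
  · rw [Dform, hder']
    have hsplit : ∫⁻ x in ooI D, ENNReal.ofReal (Real.exp (Cf a b x) * h x ^ 2)
        = ∫⁻ x in Ioo 0 p, ENNReal.ofReal (Real.exp (Cf a b x) * h x ^ 2) := by
      rw [← lintegral_indicator (nd_measurableSet_ooI D), ← lintegral_indicator measurableSet_Ioo]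
      refine lintegral_congr fun x => ?_
      by_cases hx : x ∈ Ioo 0 p
      · rw [indicator_of_mem hx, indicator_of_mem (nd_ioo_subset hp hx)]
      · rw [indicator_of_notMem hx]
        refine indicator_apply_eq_zero.2 fun hxD => ?_
        rw [hh0 x (not_lt.1 fun hlt => hx ⟨hxD.1, hlt⟩)]
        simp
    rw [hsplit]
    calc ∫⁻ x in Ioo 0 p, ENNReal.ofReal (Real.exp (Cf a b x) * h x ^ 2)
        ≤ ∫⁻ x in Ioo 0 p, (ENNReal.ofReal L * ENNReal.ofReal ((h x - g x) ^ 2) +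
            ENNReal.ofReal (1 + t) * ENNReal.ofReal (Real.exp (Cf a b x) * g x ^ 2)) := by
          refine setLIntegral_mono' measurableSet_Ioo fun x hx => ?_
          rw [← ENNReal.ofReal_mul hLpos.le, ← ENNReal.ofReal_mul (by positivity),
            ← ENNReal.ofReal_add (by positivity) (by positivity)]
          refine ENNReal.ofReal_le_ofReal ?_
          have hbx := (hb x ⟨hx.1.le, hx.2.le⟩).1
          set w := Real.exp (Cf a b x)
          have hw : 0 < w := Real.exp_pos _
          -- Young's inequality with parameter `t`
          have y1 : h x ^ 2 ≤ (1 + 1 / t) * (h x - g x) ^ 2 + (1 + t) * g x ^ 2 := by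
            have : (1 + 1 / t) * (h x - g x) ^ 2 + (1 + t) * g x ^ 2 - h x ^ 2
                = (h x - g x - t * g x) ^ 2 / t := by
              field_simp; ring
            have : 0 ≤ (h x - g x - t * g x) ^ 2 / t := by positivity
            linarith
          have y2 : w * ((1 + 1 / t) * (h x - g x) ^ 2) ≤ M * ((1 + 1 / t) * (h x - g x) ^ 2) :=
            mul_le_mul_of_nonneg_right hbx (by positivity)
          have y3 := mul_le_mul_of_nonneg_left y1 hw.le
          rw [hL]
          nlinarith
      _ = ENNReal.ofReal L * (∫⁻ x in Ioo 0 p, ENNReal.ofReal ((h x - g x) ^ 2)) +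
            ENNReal.ofReal (1 + t) *
              ∫⁻ x in Ioo 0 p, ENNReal.ofReal (Real.exp (Cf a b x) * g x ^ 2) := by
          rw [lintegral_add_left', lintegral_const_mul' _ _ ENNReal.ofReal_ne_top,
            lintegral_const_mul' _ _ ENNReal.ofReal_ne_top]
          exact (((hhc.aestronglyMeasurable.sub hgo.1).pow
            2).aemeasurable.ennreal_ofReal).const_mul _
      _ ≤ ENNReal.ofReal L * ENNReal.ofReal (s ^ 2) + ENNReal.ofReal (1 + t) *
            ∫⁻ x in ooI D, ENNReal.ofReal (Real.exp (Cf a b x) * g x ^ 2) := by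
          gcongr
          exact nd_ioo_subset hp
      _ ≤ _ := by
          rw [← ENNReal.ofReal_mul hLpos.le, add_comm]
          gcongr

/-! ### The two inequalities -/

lemma nd_lower {a b : ℝ → ℝ} {D : ℝ≥0∞} (hyp : Hyp a b D) :
    lamStar a b D ≤ lam0til a b D := by
  refine le_sInf ?_
  rintro r ⟨f, hf, hmu, h0, h1, rfl⟩
  by_cases hE : Dform a b D f = ∞
  · rw [hE]; exact le_top
  have hint : ∀ p : ℝ, 0 ≤ p → ENNReal.ofReal p ≤ D → IntegrableOn (deriv f) (Icc 0 p) := by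
    intro p hp0 hp
    rw [integrableOn_Icc_iff_integrableOn_Ioo]
    exact (nd_integrable_of_sq (measurable_deriv f).aestronglyMeasurable
      (nd_sq_finite hp (hyp.2.2.2 p hp0 hp).1 hE)).integrable (by norm_num)
  refine sInf_le ⟨f, deriv f, hint, fun x hx => ?_, hmu, h0, h1, rfl⟩
  rw [← integral_Ioc_eq_integral_Ioo, ← intervalIntegral.integral_of_le hx.1,
    intervalIntegral.integral_eq_sub_of_hasDerivAt_of_le hx.1 (hf.1.mono (nd_icc_subset hx.2))]
  · ring
  · exact fun y hy => (hf.2.1 y (nd_ioo_subset hx.2 hy)).hasDerivAt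
  · rw [intervalIntegrable_iff_integrableOn_Icc_of_le hx.1]
    exact hint x hx.1 hx.2

/-- Truncation points: `p n = n + 1` if `D = ∞`, and the constant `p n = D` otherwise. -/
lemma nd_seq {D : ℝ≥0∞} (hD : 0 < D) {f : ℝ → ℝ} (h0 : D ≠ ∞ → f D.toReal = 0)
    (h1 : D = ∞ → Tendsto f atTop (nhds 0)) :
    ∃ p : ℕ → ℝ, (∀ n, 0 < p n) ∧ (∀ n, ENNReal.ofReal (p n) ≤ D) ∧
      Tendsto (fun n => f (p n)) atTop (nhds 0) ∧ ∀ x ∈ ooI D, ∀ᶠ n in atTop, x ≤ p n := by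
  by_cases hDt : D = ∞
  · have ht : Tendsto (fun n : ℕ => (n : ℝ) + 1) atTop atTop :=
      tendsto_atTop_add_const_right _ _ tendsto_natCast_atTop_atTop
    exact ⟨fun n => n + 1, fun n => by positivity, fun n => by simp [hDt],
      (h1 hDt).comp ht, fun x _ => ht.eventually_ge_atTop x⟩
  · refine ⟨fun _ => D.toReal, fun _ => ENNReal.toReal_pos hD.ne' hDt,
      fun _ => (ENNReal.ofReal_toReal hDt).le, ?_, fun x hx => .of_forall fun _ => ?_⟩
    · simp [h0 hDt]
    · exact (ENNReal.ofReal_le_iff_le_toReal hDt).1 hx.2.le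

lemma nd_upper {a b : ℝ → ℝ} {D : ℝ≥0∞} (hD : 0 < D) (hyp : Hyp a b D) :
    lam0til a b D ≤ lamStar a b D := by
  refine le_sInf ?_
  rintro r ⟨f, g, hg, hf, hmu, h0, h1, rfl⟩
  set E := ∫⁻ x in ooI D, ENNReal.ofReal (Real.exp (Cf a b x) * g x ^ 2) with hEdef
  by_cases hE : E = ∞
  · rw [hE]; exact le_top
  obtain ⟨p, hp0, hpD, hpf, hpx⟩ := nd_seq hD h0 h1
  let t : ℕ → ℝ := fun n => 1 / ((n : ℝ) + 1)
  have ht0 : ∀ n, 0 < t n := fun n => by positivity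
  have ht : Tendsto t atTop (nhds 0) := tendsto_one_div_add_atTop_nhds_zero_nat
  choose F hFc hF1 hF0 hFf hFE using fun n =>
    nd_step (hp0 n) (hpD n) (hyp.2.2.2 _ (hp0 n).le (hpD n)).1 (hg _ (hp0 n).le (hpD n)) hf hE
      (ht0 n)
  have hlam : ∀ n, lam0til a b D * muL2 a b D (F n)
      ≤ ENNReal.ofReal (1 + t n) * E + ENNReal.ofReal (t n) := fun n => by
    refine (nd_homog (hF1 n) (fun h => hF0 n _ ?_) (fun _ => ?_) ?_).trans (hFE n)
    · exact (ENNReal.ofReal_le_iff_le_toReal h).1 (hpD n)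
    · refine tendsto_const_nhds.congr' ?_
      filter_upwards [eventually_ge_atTop (p n)] with x hx
      exact (hF0 n x hx).symm
    · exact (nd_muL2_finite (hyp.2.2.2 _ (hp0 n).le (hpD n)).2 (hFc n) (hF0 n)).ne
  have hlim : Tendsto (fun n => ENNReal.ofReal (1 + t n) * E + ENNReal.ofReal (t n)) atTop
      (nhds E) := by
    have l1 : Tendsto (fun n => ENNReal.ofReal (1 + t n)) atTop (nhds 1) := by
      simpa using ENNReal.tendsto_ofReal (ht.const_add 1)
    have l2 : Tendsto (fun n => ENNReal.ofReal (t n)) atTop (nhds 0) := by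
      simpa using ENNReal.tendsto_ofReal ht
    simpa using (ENNReal.Tendsto.mul_const l1 (Or.inr hE)).add l2
  have hptw : ∀ x ∈ ooI D, Tendsto (fun n => F n x) atTop (nhds (f x)) := fun x hx => by
    have l1 : Tendsto (fun n => F n x - (f x - f (p n))) atTop (nhds 0) := by
      refine squeeze_zero_norm' ?_ ht
      filter_upwards [hpx x hx] with n hn
      exact hFf n x ⟨hx.1.le, hn⟩
    simpa using l1.add (hpf.const_sub (f x))
  -- Only a lower bound for `μ(F²)` is needed, so Fatou's lemma suffices even if `μ` is infinite.
  have hfatou : 1 ≤ liminf (fun n => muL2 a b D (F n)) atTop := by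
    rw [← hmu]
    refine le_trans (lintegral_mono_ae ?_) (lintegral_liminf_le fun n =>
      ((hFc n).measurable.pow_const 2).ennreal_ofReal)
    have hpos : ∀ᵐ x ∂(muM a b D), x ∈ ooI D :=
      (withDensity_absolutelyContinuous _ _).ae_le (ae_restrict_mem (nd_measurableSet_ooI D))
    filter_upwards [hpos] with x hx
    exact (ENNReal.tendsto_ofReal ((hptw x hx).pow 2)).liminf_eq.ge
  calc lam0til a b D = liminf (fun _ : ℕ => lam0til a b D) atTop * 1 := by simp
    _ ≤ liminf (fun _ : ℕ => lam0til a b D) atTop * liminf (fun n => muL2 a b D (F n)) atTop := by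
        gcongr
    _ ≤ liminf (fun n => lam0til a b D * muL2 a b D (F n)) atTop := ENNReal.le_liminf_mul
    _ ≤ liminf (fun n => ENNReal.ofReal (1 + t n) * E + ENNReal.ofReal (t n)) atTop :=
        liminf_le_liminf (.of_forall hlam)
    _ = E := hlim.liminf_eq

/-- Lemma 3.2: `λ̃₀ = λ*`. -/
theorem nd_lam0til_eq_lamStar
    (a b : ℝ → ℝ) (D : ℝ≥0∞) (hD : 0 < D) (hyp : Hyp a b D) :
    lam0til a b D = lamStar a b D := by
  exact le_antisymm (nd_upper hD hyp) (nd_lower hyp)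
end
end

section
/- Under hypothesis (1.0): (1) for any p, q ∈ (0,D] with p < q, the ND eigenvalues satisfy λ₀^{(0,p)} > λ₀^{(0,q)}, and if pₙ ∈ (0,D) increases strictly to D then λ₀^{(0,pₙ)} decreases strictly to λ₀^{(0,D)} = λ̃₀; (2) for every p ∈ (0,D), the Neumann–Neumann eigenvalue satisfies λ₁^{(0,p)} > λ₀^{(0,p)}. -/
/-!
Write `E = e^C` and `m = e^C / a`, so that `μ = m dx` and `D(f) = ∫ E f'²`. Every lower bound on an
energy rests on two steps.

*Rearrangement.* A test function `f` on `(0,p)` is compared with the decreasing function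
`T(x) = ∫_x^p |f'|`, which has the same energy. The increments of `f` are dominated by those of `T`
(`osc`), so `μ(f²) ≤ μ(T²)` when `f(p) = 0`, and `Var f ≤ Var T` in general.

*Duality.* For `k` in `L²(μ)` put `F(x) = ∫_0^x k dμ` and `g(x) = ∫_x^r F / E`. The function `g` is
`C¹` even if `k` is discontinuous, hence admissible for `λ₀` on `(0,r)`, and by Fubini
`D(g) = ∫ F² / E = ∫ k g dμ ≤ ‖k‖ ‖g‖`, so that `λ₀ ∫ F² / E ≤ ‖k‖²`. On the other hand
`∫ k T dμ = ∫ F |f'|` is at most `(∫ F² / E)^{1/2} D(f)^{1/2}`. With `k = T` this reproves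
`λ₀ μ(T²) ≤ D(f)`, and both strict inequalities come from improving this choice by a factor that
does not depend on `f`; no eigenfunction is needed.

* For `p < q` (`core1`, `gap_ND`), take `k = T` on `(0,p)` and `k = 0` beyond. Cutting `F / E` off
  linearly on an interval `[p,r]` with `p < r < q` leaves a test function on `(0,q)` whose energy has
  the extra contribution `F(p)² ∫_p^r η² / E`. As `F(p)` is controlled from below by `μ(T²)` and
  `D(f)`, this gives `λ₀^{(0,q)} (1 + κ) ≤ λ₀^{(0,p)}` with `κ > 0`.
* For the Neumann–Neumann eigenvalue (`core2`, `nn_gap`), let `h` be `T` minus its mean. It is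
  decreasing with mean zero, so `∫_0^x h dμ ≥ 0`. Taking `k = h + t` with a small constant `t > 0`
  raises the energy to first order in `t` and `‖k‖²` only to second order, which gives
  `λ₀^{(0,p)} (1 + κ) ≤ λ₁^{(0,p)}` with `κ > 0`.

Since `λ₀^{(0,p)}` is positive (`lam0sub_pos`) and finite (`lam0sub_ne_top`), these factors give
strict inequalities. For the limit (`lam0sub_tendsto`), a test function `f` on `(0,D)` is compared
with `f - f(pₙ)` on `(0,pₙ)`, and Fatou's lemma yields `lim λ₀^{(0,pₙ)} μ(f²) ≤ D(f)`.
-/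

open MeasureTheory Set Filter Topology ENNReal

noncomputable section

/-- The ND principal eigenvalue `λ₀^{(0,p)}` on the subinterval `(0,p)` (with Neumann
boundary at `0` and Dirichlet boundary at `p`, interpreted as a vanishing limit when
`p = ∞`). -/
def lam0sub (a b : ℝ → ℝ) (p : ℝ≥0∞) : ℝ≥0∞ :=
  sInf {r | ∃ f : ℝ → ℝ, C1C p f ∧ muL2 a b p f = 1 ∧
    (p ≠ ∞ → f p.toReal = 0) ∧ (p = ∞ → Tendsto f atTop (nhds 0)) ∧
    r = Dform a b p f}

/-- The NN (Neumann–Neumann) eigenvalue `λ₁^{(0,p)}` on `(0,p)` for finite `p`: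
the infimum of `D_{0,p}(f)/Var_{(0,p)}(f)` over nonconstant `f ∈ C¹(0,p) ∩ C[0,p]`
with `f ∈ L²((0,p); μ)`. -/
def lam1NN (a b : ℝ → ℝ) (p : ℝ) : ℝ≥0∞ :=
  sInf {r | ∃ f : ℝ → ℝ, C1C (ENNReal.ofReal p) f ∧
    Integrable (fun x => f x ^ 2) (muM a b (ENNReal.ofReal p)) ∧
    (∃ x ∈ Set.Icc 0 p, ∃ y ∈ Set.Icc 0 p, f x ≠ f y) ∧
    r = Dform a b (ENNReal.ofReal p) f /
      ENNReal.ofReal ((∫ x, f x ^ 2 ∂(muM a b (ENNReal.ofReal p))) -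
        (∫ x, f x ∂(muM a b (ENNReal.ofReal p))) ^ 2 /
          (muM a b (ENNReal.ofReal p) Set.univ).toReal)}

/-! ### Integral inequalities on an interval -/

lemma lin3 {X : Type*} [MeasurableSpace X] {μ : Measure X} {α β γ : X → ℝ}
    (hα : Integrable α μ) (hβ : Integrable β μ) (hγ : Integrable γ μ) (i j k : ℝ) :
    ∫ x, (i * α x + j * β x + k * γ x) ∂μ
      = i * (∫ x, α x ∂μ) + j * (∫ x, β x ∂μ) + k * ∫ x, γ x ∂μ := by
  have h1 := integral_add ((hα.const_mul i).add (hβ.const_mul j)) (hγ.const_mul k)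
  have h2 := integral_add (hα.const_mul i) (hβ.const_mul j)
  simp only [Pi.add_apply, integral_const_mul] at h1 h2
  rw [h1, h2]

/-- Cauchy–Schwarz in the form `(∫ β)² ≤ ∫ α · ∫ γ` whenever `β² ≤ α γ` pointwise, which avoids
square roots of the weights. -/
lemma cs3 {X : Type*} [MeasurableSpace X] {μ : Measure X} {α β γ : X → ℝ}
    (hα : Integrable α μ) (hβ : Integrable β μ) (hγ : Integrable γ μ)
    (h : ∀ᵐ x ∂μ, 0 ≤ α x ∧ 0 ≤ γ x ∧ β x ^ 2 ≤ α x * γ x) :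
    (∫ x, β x ∂μ) ^ 2 ≤ (∫ x, α x ∂μ) * ∫ x, γ x ∂μ := by
  have q : ∀ t : ℝ, 0 ≤ (∫ x, α x ∂μ) * (t * t) + (2 * ∫ x, β x ∂μ) * t + ∫ x, γ x ∂μ := by
    intro t
    have e : (∫ x, α x ∂μ) * (t * t) + (2 * ∫ x, β x ∂μ) * t + ∫ x, γ x ∂μ
        = ∫ x, ((t * t) * α x + (2 * t) * β x + 1 * γ x) ∂μ := by
      rw [lin3 hα hβ hγ]; ring
    rw [e]
    apply integral_nonneg_of_ae
    filter_upwards [h] with x ⟨h1, h2, h3⟩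
    show 0 ≤ (t * t) * α x + (2 * t) * β x + 1 * γ x
    rw [one_mul]
    rcases h1.eq_or_lt with h0 | h0
    · rw [← h0] at h3 ⊢
      have : β x = 0 := by nlinarith
      rw [this]; linarith
    · by_contra hc
      push Not at hc
      nlinarith [sq_nonneg (α x * t + β x), mul_pos_of_neg_of_neg hc (neg_lt_zero.2 h0)]
  have := discrim_le_zero q
  rw [discrim] at this
  nlinarith

/-- Fubini on the triangle `0 < x < s < r`: the duality behind `core1` and `core2`. -/
lemma fub {u v : ℝ → ℝ} {r : ℝ} (hu : IntegrableOn u (Ioo 0 r)) (hv : IntegrableOn v (Ioo 0 r)) :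
    ∫ x in Ioo 0 r, u x * ∫ s in Ioo x r, v s = ∫ s in Ioo 0 r, (∫ x in Ioo 0 s, u x) * v s := by
  have hS : MeasurableSet {z : ℝ × ℝ | z.1 < z.2} := measurableSet_lt measurable_fst measurable_snd
  have hi := (Integrable.mul_prod hu hv).indicator hS
  have := integral_integral_swap (f := fun (x s : ℝ) => ({z : ℝ × ℝ | z.1 < z.2}).indicator
    (fun z : ℝ × ℝ => u z.1 * v z.2) (x, s)) hi
  calc _ = ∫ x in Ioo 0 r, ∫ s in Ioo 0 r, ({z : ℝ × ℝ | z.1 < z.2}).indicator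
          (fun z : ℝ × ℝ => u z.1 * v z.2) (x, s) := by
        apply setIntegral_congr_fun measurableSet_Ioo
        intro x hx
        have e : (fun s => ({z : ℝ × ℝ | z.1 < z.2}).indicator
          (fun z : ℝ × ℝ => u z.1 * v z.2) (x, s)) = (Ioi x).indicator (fun s => u x * v s) := by
          ext s; simp [indicator]
        simp only [e]
        rw [setIntegral_indicator measurableSet_Ioi, integral_const_mul, Ioo_inter_Ioi,
          max_eq_right hx.1.le]
    _ = _ := this
    _ = _ := by
        apply setIntegral_congr_fun measurableSet_Ioo
        intro s hs
        have e : (fun x => ({z : ℝ × ℝ | z.1 < z.2}).indicator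
          (fun z : ℝ × ℝ => u z.1 * v z.2) (x, s)) = (Iio s).indicator (fun x => u x * v s) := by
          ext x; simp [indicator]
        simp only [e]
        rw [setIntegral_indicator measurableSet_Iio, integral_mul_const, Ioo_inter_Iio,
          min_eq_right hs.2.le]

lemma contL {u : ℝ → ℝ} {r : ℝ} (hu : IntegrableOn u (Ioo 0 r)) :
    ContinuousOn (fun x => ∫ s in Ioo 0 x, u s) (Icc 0 r) := by
  have h := intervalIntegral.continuousOn_primitive (f := u) (a := 0) (b := r) (μ := volume)
    (by rwa [integrableOn_Icc_iff_integrableOn_Ioo])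
  simpa only [integral_Ioc_eq_integral_Ioo] using h

lemma splitI {u : ℝ → ℝ} {x y z : ℝ} (hu : IntegrableOn u (Ioo x z)) (hx : x ≤ y) (hr : y ≤ z) :
    ∫ s in Ioo x z, u s = (∫ s in Ioo x y, u s) + ∫ s in Ioo y z, u s := by
  have h : IntegrableOn u (Ioc x z) := by rwa [integrableOn_Ioc_iff_integrableOn_Ioo]
  simp only [← integral_Ioc_eq_integral_Ioo]
  rw [← Ioc_union_Ioc_eq_Ioc hx hr]
  apply setIntegral_union _ measurableSet_Ioc (h.mono_set (Ioc_subset_Ioc_right hr))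
    (h.mono_set (Ioc_subset_Ioc_left hx))
  rw [Set.disjoint_left]; intro s h1 h2; exact absurd h1.2 (not_le.2 h2.1)

lemma contR {u : ℝ → ℝ} {r : ℝ} (hu : IntegrableOn u (Ioo 0 r)) :
    ContinuousOn (fun x => ∫ s in Ioo x r, u s) (Icc 0 r) := by
  have : ContinuousOn (fun x => (∫ s in Ioo 0 r, u s) - ∫ s in Ioo 0 x, u s) (Icc 0 r) :=
    continuousOn_const.sub (contL hu)
  refine this.congr fun x hx => ?_
  have := splitI hu hx.1 hx.2
  simp only; linarith

lemma intMul {f m : ℝ → ℝ} {r : ℝ} (hf : ContinuousOn f (Icc 0 r)) (hm : IntegrableOn m (Ioo 0 r)) :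
    IntegrableOn (fun x => f x * m x) (Ioo 0 r) := by
  have hm' : IntegrableOn m (Icc 0 r) := by rwa [integrableOn_Icc_iff_integrableOn_Ioo]
  exact (hm'.continuousOn_mul hf isCompact_Icc).mono_set Ioo_subset_Icc_self

lemma intC {f : ℝ → ℝ} {r : ℝ} (hf : ContinuousOn f (Icc 0 r)) : IntegrableOn f (Ioo 0 r) :=
  hf.integrableOn_Icc.mono_set Ioo_subset_Icc_self

/-- A function of finite weighted energy is integrable, by `|w| ≤ w² E + E⁻¹`. -/
lemma intW {E w : ℝ → ℝ} {p : ℝ} (hE : ContinuousOn E (Icc 0 p)) (hE0 : ∀ x ∈ Icc 0 p, 0 < E x)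
    (hw : AEStronglyMeasurable w (volume.restrict (Ioo 0 p)))
    (hw2 : IntegrableOn (fun x => w x ^ 2 * E x) (Ioo 0 p)) : IntegrableOn w (Ioo 0 p) := by
  have h1 : IntegrableOn (fun x => (E x)⁻¹) (Ioo 0 p) :=
    intC (hE.inv₀ fun x hx => (hE0 x hx).ne')
  refine Integrable.mono' (hw2.add h1) hw ?_
  filter_upwards [ae_restrict_mem measurableSet_Ioo] with x hx
  have := hE0 x (Ioo_subset_Icc_self hx)
  show |w x| ≤ w x ^ 2 * E x + (E x)⁻¹
  have h2 : E x * (E x)⁻¹ = 1 := mul_inv_cancel₀ this.ne'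
  have h3 := inv_pos.2 this
  rw [← sq_abs]
  have h4 := abs_nonneg (w x)
  have : 0 ≤ (E x)⁻¹ * ((|w x| * E x - 1) ^ 2 + |w x| * E x) := by positivity
  have e : (E x)⁻¹ * ((|w x| * E x - 1) ^ 2 + |w x| * E x) = 
    (E x * (E x)⁻¹) * (|w x| ^ 2 * E x) - (E x * (E x)⁻¹) * |w x| + (E x)⁻¹ := by ring
  rw [e, h2] at this
  linarith

lemma sqW {E w : ℝ → ℝ} {p : ℝ} (hE : ContinuousOn E (Icc 0 p)) (hE0 : ∀ x ∈ Icc 0 p, 0 < E x)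
    (hw : AEStronglyMeasurable w (volume.restrict (Ioo 0 p)))
    (hw2 : IntegrableOn (fun x => w x ^ 2 * E x) (Ioo 0 p)) :
    (∫ x in Ioo 0 p, w x) ^ 2 ≤ (∫ x in Ioo 0 p, (E x)⁻¹) * ∫ x in Ioo 0 p, w x ^ 2 * E x := by
  refine cs3 (intC (hE.inv₀ fun x hx => (hE0 x hx).ne')) (intW hE hE0 hw hw2) hw2 ?_
  filter_upwards [ae_restrict_mem measurableSet_Ioo] with x hx
  have := hE0 x (Ioo_subset_Icc_self hx)
  refine ⟨by positivity, by positivity, le_of_eq ?_⟩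
  field_simp

lemma posI {f : ℝ → ℝ} {x y : ℝ} (hxy : x < y) (hf : IntegrableOn f (Ioo x y))
    (h : ∀ s ∈ Ioo x y, 0 < f s) : 0 < ∫ s in Ioo x y, f s := by
  rw [setIntegral_pos_iff_support_of_nonneg_ae _ hf]
  · have : Function.support f ∩ Ioo x y = Ioo x y := by
      apply inter_eq_right.2; intro s hs; exact (h s hs).ne'
    rw [this]; simp [hxy]
  · filter_upwards [ae_restrict_mem measurableSet_Ioo] with s hs using (h s hs).le

lemma T_bd {w : ℝ → ℝ} {p x : ℝ} (hw0 : ∀ x, 0 ≤ w x) (hw : IntegrableOn w (Ioo 0 p))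
    (hx : 0 ≤ x) : 0 ≤ (∫ s in Ioo x p, w s) ∧ (∫ s in Ioo x p, w s) ≤ ∫ s in Ioo 0 p, w s :=
  ⟨integral_nonneg fun _ => hw0 _,
    setIntegral_mono_set hw (Eventually.of_forall hw0) (Ioo_subset_Ioo_left hx).eventuallyLE⟩

/-! ### The two duality estimates -/

/-- Here `E` stands for `e^C`, `m` for the density `e^C / a`, `w` for `|f'|`, and `l` for a number
that satisfies the ND inequality on `(0,r)` for the test functions `∫_x^r v`. With
`T(x) = ∫_x^p w` on the shorter interval `(0,p)` and `F(x) = ∫_0^{x ∧ p} T m`, Fubini and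
Cauchy–Schwarz bound `(∫_0^p T² m)²` by the product of `∫_0^p F² / E` and the energy of `w`. The
choice `v = η F / E`, with `η` falling linearly from `1` to `0` on `[p,r]`, collects in addition the
energy `F(p)² ∫_p^r η² / E`, and this is the source of the factor greater than `1`. -/
lemma core1 {E m w : ℝ → ℝ} {p r l : ℝ} (hp : 0 < p) (hpr : p < r)
    (hE : ContinuousOn E (Icc 0 r)) (hE0 : ∀ x ∈ Icc 0 r, 0 < E x)
    (hm : IntegrableOn m (Ioo 0 r)) (hm0 : ∀ x ∈ Ioo 0 r, 0 < m x)
    (hw : AEStronglyMeasurable w (volume.restrict (Ioo 0 p))) (hw0 : ∀ x, 0 ≤ w x)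
    (hw2 : IntegrableOn (fun x => w x ^ 2 * E x) (Ioo 0 p)) (hl : 0 ≤ l)
    (hN : 0 < ∫ x in Ioo 0 p, (∫ s in Ioo x p, w s) ^ 2 * m x)
    (htest : ∀ v : ℝ → ℝ, ContinuousOn v (Icc 0 r) → v r = 0 →
      l * (∫ x in Ioo 0 r, (∫ s in Ioo x r, v s) ^ 2 * m x) ≤ ∫ x in Ioo 0 r, E x * v x ^ 2) :
    l * (∫ x in Ioo 0 p, (∫ s in Ioo x p, w s) ^ 2 * m x) *
      (1 + (∫ x in Ioo p r, ((r - x) / (r - p)) ^ 2 / E x) / ∫ x in Ioo 0 p, (E x)⁻¹) ≤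
      ∫ x in Ioo 0 p, w x ^ 2 * E x := by
  have hpI : Icc 0 p ⊆ Icc 0 r := Icc_subset_Icc_right hpr.le
  have hpO : Ioo 0 p ⊆ Ioo 0 r := Ioo_subset_Ioo_right hpr.le
  have hEi : ContinuousOn (fun x => (E x)⁻¹) (Icc 0 r) := hE.inv₀ fun x hx => (hE0 x hx).ne'
  have hwi := intW (hE.mono hpI) (fun x hx => hE0 x (hpI hx)) hw hw2
  have hW := sqW (hE.mono hpI) (fun x hx => hE0 x (hpI hx)) hw hw2
  set T : ℝ → ℝ := fun x => ∫ s in Ioo x p, w s with hT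
  have hTc : ContinuousOn T (Icc 0 p) := contR hwi
  set d := ∫ x in Ioo 0 p, w x ^ 2 * E x with hd
  set S := ∫ x in Ioo 0 p, (E x)⁻¹ with hS
  set N := ∫ x in Ioo 0 p, T x ^ 2 * m x with hNd
  set W := ∫ x in Ioo 0 p, w x with hWd
  have hS0 : 0 < S := posI hp (intC (hEi.mono hpI)) fun s hs =>
    inv_pos.2 (hE0 s (hpI (Ioo_subset_Icc_self hs)))
  -- `u` is the density `T m` continued by zero, so that `F` is constant on `[p,r]`
  set u : ℝ → ℝ := (Ioo 0 p).indicator (fun x => T x * m x) with hu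
  have hTm : IntegrableOn (fun x => T x * m x) (Ioo 0 p) := intMul hTc (hm.mono_set hpO)
  have hui : Integrable u := (integrable_indicator_iff measurableSet_Ioo).2 hTm
  have hup : ∀ x ∈ Ioo 0 p, u x = T x * m x := fun x hx => indicator_of_mem hx _
  set F : ℝ → ℝ := fun x => ∫ s in Ioo 0 x, u s with hF
  have hFc : ContinuousOn F (Icc 0 r) := contL hui.integrableOn
  have hFr : ∀ x, p ≤ x → F x = F p := by
    intro x hx
    simp only [hF, hu]
    rw [setIntegral_indicator measurableSet_Ioo, setIntegral_indicator measurableSet_Ioo,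
      inter_eq_right.2 (Ioo_subset_Ioo_right hx), inter_self]
  have hTb := fun x (hx : x ∈ Ioo 0 p) => T_bd hw0 hwi hx.1.le
  have hmp : ∀ x ∈ Ioo 0 p, 0 < m x := fun x hx => hm0 x (hpO hx)
  set A := ∫ x in Ioo 0 p, F x ^ 2 * (E x)⁻¹ with hA
  -- duality on `(0,p)`
  have hN1 : N = ∫ x in Ioo 0 p, F x * w x := by
    rw [← fub hui.integrableOn hwi]
    apply setIntegral_congr_fun measurableSet_Ioo
    intro x hx
    simp only [hup x hx]; ring
  have hNA : N ^ 2 ≤ A * d := by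
    rw [hN1]
    refine cs3 (intC (((hFc.pow 2).mul hEi).mono hpI)) (intMul (hFc.mono hpI) hwi) hw2 ?_
    filter_upwards [ae_restrict_mem measurableSet_Ioo] with x hx
    have := hE0 x (hpI (Ioo_subset_Icc_self hx))
    refine ⟨by positivity, by positivity, le_of_eq ?_⟩
    field_simp
  have hNF : N ≤ W * F p := by
    rw [hNd, hF, ← integral_const_mul]
    refine setIntegral_mono_on (intMul (hTc.pow 2) (hm.mono_set hpO))
      (hui.integrableOn.const_mul _) measurableSet_Ioo ?_
    intro x hx
    rw [hup x hx]
    have h1 := hmp x hx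
    obtain ⟨h2, h3⟩ := hTb x hx
    have : T x * (T x * m x) ≤ W * (T x * m x) :=
      mul_le_mul_of_nonneg_right h3 (mul_nonneg h2 h1.le)
    linarith
  have hFpS : N ^ 2 ≤ F p ^ 2 * (S * d) := by
    have : N ^ 2 ≤ (W * F p) ^ 2 := pow_le_pow_left₀ hN.le hNF 2
    nlinarith [sq_nonneg (F p)]
  have hη : 0 < r - p := sub_pos.2 hpr
  -- the cut-off on `[p,r]`, needed for `v r = 0`
  set η : ℝ → ℝ := fun x => min 1 ((r - x) / (r - p)) with hηd
  have hηc : Continuous η := by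
    apply continuous_const.min; fun_prop
  have hη1 : ∀ x, x ≤ p → η x = 1 := fun x hx => min_eq_left (by rw [le_div_iff₀ hη]; linarith)
  have hη2 : ∀ x, p ≤ x → η x = (r - x) / (r - p) :=
    fun x hx => min_eq_right (by rw [div_le_iff₀ hη]; linarith)
  have hη01 : ∀ x, x ≤ r → 0 ≤ η x ∧ η x ≤ 1 := fun x hx =>
    ⟨le_min zero_le_one (div_nonneg (by linarith) hη.le), min_le_left _ _⟩
  set v : ℝ → ℝ := fun x => F x * η x * (E x)⁻¹ with hv
  have hvc : ContinuousOn v (Icc 0 r) := (hFc.mul hηc.continuousOn).mul hEi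
  have hvi := intC hvc
  have ht := htest v hvc (by simp [hv, hη2 r hpr.le])
  set g : ℝ → ℝ := fun x => ∫ s in Ioo x r, v s with hg
  have hgc : ContinuousOn g (Icc 0 r) := contR hvi
  set B := ∫ x in Ioo 0 r, E x * v x ^ 2 with hB
  set R := ∫ x in Ioo p r, ((r - x) / (r - p)) ^ 2 / E x with hR
  have hBi : IntegrableOn (fun x => E x * v x ^ 2) (Ioo 0 r) := intC (hE.mul (hvc.pow 2))
  have hBeq : B = A + F p ^ 2 * R := by
    rw [hB, splitI hBi hp.le hpr.le, hA, hR, ← integral_const_mul]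
    congr 1
    · apply setIntegral_congr_fun measurableSet_Ioo
      intro x hx
      have := (hE0 x (hpI (Ioo_subset_Icc_self hx))).ne'
      simp only [hv, hη1 x hx.2.le]; field_simp
    · apply setIntegral_congr_fun measurableSet_Ioo
      intro x hx
      have := (hE0 x ⟨hp.le.trans hx.1.le, hx.2.le⟩).ne'
      simp only [hv, hη2 x hx.1.le, hFr x hx.1.le]; field_simp
  set P := ∫ x in Ioo 0 r, u x * g x with hP
  have hBP : B ≤ P := by
    rw [hP, fub hui.integrableOn hvi]
    refine setIntegral_mono_on hBi (intC (hFc.mul hvc)) measurableSet_Ioo ?_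
    intro x hx
    have hEx := hE0 x (Ioo_subset_Icc_self hx)
    obtain ⟨h1, h2⟩ := hη01 x hx.2.le
    have e : E x * v x ^ 2 = F x ^ 2 * (E x)⁻¹ * (η x * η x) := by
      simp only [hv]; field_simp
    rw [e]
    have e' : F x * v x = F x ^ 2 * (E x)⁻¹ * (η x * 1) := by simp only [hv]; ring
    change _ ≤ F x * v x
    rw [e']
    gcongr
  have hCS : P ^ 2 ≤ N * ∫ x in Ioo 0 r, g x ^ 2 * m x := by
    have hα : Integrable ((Ioo 0 p).indicator (fun x => T x ^ 2 * m x)) :=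
      (integrable_indicator_iff measurableSet_Ioo).2 (intMul (hTc.pow 2) (hm.mono_set hpO))
    have e : N = ∫ x in Ioo 0 r, (Ioo 0 p).indicator (fun x => T x ^ 2 * m x) x := by
      rw [setIntegral_indicator measurableSet_Ioo, inter_eq_right.2 hpO]
    rw [e]
    refine cs3 hα.integrableOn ?_ (intMul (hgc.pow 2) hm) ?_
    · exact (intMul hgc (hui.integrableOn (s := Ioo 0 r))).congr
        (Eventually.of_forall fun x => mul_comm _ _)
    filter_upwards [ae_restrict_mem measurableSet_Ioo] with x hx
    have h1 := hm0 x hx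
    by_cases hxp : x ∈ Ioo 0 p
    · rw [indicator_of_mem hxp, hup x hxp]
      exact ⟨by positivity, by positivity, le_of_eq (by ring)⟩
    · have : u x = 0 := indicator_of_notMem hxp _
      rw [indicator_of_notMem hxp, this]
      exact ⟨le_rfl, by positivity, by simp⟩
  have hB0 : 0 ≤ A := setIntegral_nonneg measurableSet_Ioo fun x hx => by
    have := hE0 x (hpI (Ioo_subset_Icc_self hx)); positivity
  have hd0 : 0 ≤ d := setIntegral_nonneg measurableSet_Ioo fun x hx => by
    have := hE0 x (hpI (Ioo_subset_Icc_self hx)); positivity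
  have hR0 : 0 ≤ R := setIntegral_nonneg measurableSet_Ioo fun x hx => by
    have := hE0 x ⟨hp.le.trans hx.1.le, hx.2.le⟩; positivity
  have hApos : 0 < A := by
    rcases hB0.eq_or_lt with h | h
    · rw [← h] at hNA; nlinarith
    · exact h
  have hBpos : 0 < B := by rw [hBeq]; positivity
  have hlB : l * B ≤ N := by
    have h1 : l * B ^ 2 ≤ l * P ^ 2 := by gcongr
    have h2 : l * P ^ 2 ≤ N * B := by
      calc l * P ^ 2 ≤ l * (N * ∫ x in Ioo 0 r, g x ^ 2 * m x) := by gcongr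
        _ = N * (l * ∫ x in Ioo 0 r, g x ^ 2 * m x) := by ring
        _ ≤ N * B := by gcongr
    have h3 : (l * B) * B ≤ N * B := by linarith
    exact le_of_mul_le_mul_right h3 hBpos
  have hfin : l * N * (1 + R / S) * N ≤ d * N := by
    have h1 : N ^ 2 / S ≤ F p ^ 2 * d := by
      rw [div_le_iff₀ hS0]; linarith
    calc l * N * (1 + R / S) * N = l * (N ^ 2 + R * (N ^ 2 / S)) := by field_simp
      _ ≤ l * (A * d + R * (F p ^ 2 * d)) := by gcongr
      _ = d * (l * B) := by rw [hBeq]; ring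
      _ ≤ d * N := by gcongr
  exact le_of_mul_le_mul_right hfin hN

/-- The arithmetic behind `core2`. If the conclusion failed, then `d < 2 l V`, and the second-order
term `τ` would be too small to offset the first-order gain `2σ`. -/
lemma alg2 {l σ S μ V A d B τ : ℝ} (hl : 0 < l) (hσ0 : 0 < σ) (hS0 : 0 < S) (hμ0 : 0 < μ)
    (hVp : 0 < V) (hd0 : 0 ≤ d) (hVA : V ^ 2 ≤ A * d) (hBA : (1 + 2 * σ) * A ≤ B)
    (hlB : l * B ≤ V + τ) (ht2 : τ ≤ σ ^ 2 * (S * d) * μ) (hσ : σ = 1 / (4 * S * μ * l)) :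
    l * (1 + min 1 σ) * V ≤ d := by
  have key : l * (1 + 2 * σ) * V ^ 2 ≤ d * V + σ * d ^ 2 / (4 * l) := by
    calc l * (1 + 2 * σ) * V ^ 2 ≤ l * (1 + 2 * σ) * (A * d) := by gcongr
      _ = d * (l * ((1 + 2 * σ) * A)) := by ring
      _ ≤ d * (l * B) := by gcongr
      _ ≤ d * (V + σ ^ 2 * (S * d) * μ) := by gcongr; linarith
      _ = d * V + σ * d ^ 2 / (4 * l) := by
        have : σ * S * μ = 1 / (4 * l) := by rw [hσ]; field_simp
        have e : d * (V + σ ^ 2 * (S * d) * μ) = d * V + σ * (σ * S * μ) * d ^ 2 := by ring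
        rw [e, this]; ring
  by_contra hcon
  push Not at hcon
  have c1 : d < l * 2 * V := hcon.trans_le (by
    gcongr; linarith [min_le_left (1:ℝ) σ])
  have c2 : d < l * (1 + σ) * V := hcon.trans_le (by
    gcongr; exact min_le_right (1:ℝ) σ)
  have c3 : σ * d ^ 2 / (4 * l) ≤ σ * l * V ^ 2 := by
    rw [div_le_iff₀ (by positivity)]
    have : d ^ 2 ≤ (l * 2 * V) ^ 2 := pow_le_pow_left₀ hd0 c1.le 2
    calc σ * d ^ 2 ≤ σ * (l * 2 * V) ^ 2 := by gcongr
      _ = _ := by ring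
  have c4 : d * V < l * (1 + σ) * V * V := mul_lt_mul_of_pos_right c2 hVp
  linarith

/-- Notation as in `core1`, with `r = p` and `c` the `m`-mean of `T(x) = ∫_x^p w`. Since
`h = T - c` is decreasing with mean zero, `F(x) = ∫_0^x h m` is nonnegative, and with
`M(x) = ∫_0^x m` the choice `v = (F + t M) / E` dualises `h + t` instead of `h`. The norm of `h + t`
exceeds that of `h` only by `t² ∫ m`, while the energy grows linearly in `t`, so a small `t > 0`
beats the trivial bound. -/
lemma core2 {E m w : ℝ → ℝ} {p l : ℝ} (hp : 0 < p)
    (hE : ContinuousOn E (Icc 0 p)) (hE0 : ∀ x ∈ Icc 0 p, 0 < E x)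
    (hm : IntegrableOn m (Ioo 0 p)) (hm0 : ∀ x ∈ Ioo 0 p, 0 < m x)
    (hw : AEStronglyMeasurable w (volume.restrict (Ioo 0 p))) (hw0 : ∀ x, 0 ≤ w x)
    (hw2 : IntegrableOn (fun x => w x ^ 2 * E x) (Ioo 0 p)) (hl : 0 < l)
    (htest : ∀ v : ℝ → ℝ, ContinuousOn v (Icc 0 p) →
      l * (∫ x in Ioo 0 p, (∫ s in Ioo x p, v s) ^ 2 * m x) ≤ ∫ x in Ioo 0 p, E x * v x ^ 2)
    (c : ℝ) (hc : c = (∫ x in Ioo 0 p, (∫ s in Ioo x p, w s) * m x) / ∫ x in Ioo 0 p, m x) :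
    l * (1 + min 1 (1 / (4 * (∫ x in Ioo 0 p, (E x)⁻¹) * (∫ x in Ioo 0 p, m x) * l))) *
      (∫ x in Ioo 0 p, ((∫ s in Ioo x p, w s) - c) ^ 2 * m x) ≤
      ∫ x in Ioo 0 p, w x ^ 2 * E x := by
  have hEi : ContinuousOn (fun x => (E x)⁻¹) (Icc 0 p) := hE.inv₀ fun x hx => (hE0 x hx).ne'
  have hEip : ∀ x ∈ Ioo 0 p, 0 < (E x)⁻¹ := fun s hs =>
    inv_pos.2 (hE0 s (Ioo_subset_Icc_self hs))
  have hwi := intW hE hE0 hw hw2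
  have hW := sqW hE hE0 hw hw2
  set T : ℝ → ℝ := fun x => ∫ s in Ioo x p, w s with hT
  have hTc : ContinuousOn T (Icc 0 p) := contR hwi
  set d := ∫ x in Ioo 0 p, w x ^ 2 * E x with hd
  set S := ∫ x in Ioo 0 p, (E x)⁻¹ with hS
  set W := ∫ x in Ioo 0 p, w x with hWd
  set μ := ∫ x in Ioo 0 p, m x with hμ
  have hS0 : 0 < S := posI hp (intC hEi) hEip
  have hμ0 : 0 < μ := posI hp hm hm0
  have hTm : IntegrableOn (fun x => T x * m x) (Ioo 0 p) := intMul hTc hm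
  have hTb := fun x (hx : x ∈ Ioo 0 p) => T_bd hw0 hwi hx.1.le
  set h : ℝ → ℝ := fun x => T x - c with hh
  have hhc : ContinuousOn h (Icc 0 p) := hTc.sub continuousOn_const
  have hhm : IntegrableOn (fun x => h x * m x) (Ioo 0 p) := intMul hhc hm
  have hmean : ∫ x in Ioo 0 p, h x * m x = 0 := by
    simp only [hh, sub_mul]
    rw [integral_sub hTm (hm.const_mul _), integral_const_mul, ← hμ, hc]
    rw [div_mul_cancel₀ _ hμ0.ne', sub_self]
  have hc0 : 0 ≤ c := by
    rw [hc]; apply div_nonneg _ hμ0.le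
    exact setIntegral_nonneg measurableSet_Ioo fun x hx => mul_nonneg (hTb x hx).1 (hm0 x hx).le
  have hhW : ∀ x ∈ Ioo 0 p, h x ≤ W := fun x hx => by
    have := (hTb x hx).2; simp only [hh]; linarith
  set V := ∫ x in Ioo 0 p, h x ^ 2 * m x with hV
  have hV0 : 0 ≤ V := setIntegral_nonneg measurableSet_Ioo fun x hx =>
    mul_nonneg (sq_nonneg _) (hm0 x hx).le
  have hd0 : 0 ≤ d := setIntegral_nonneg measurableSet_Ioo fun x hx => by
    have := hE0 x (Ioo_subset_Icc_self hx); positivity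
  set F : ℝ → ℝ := fun x => ∫ s in Ioo 0 x, h s * m s with hF
  set M : ℝ → ℝ := fun x => ∫ s in Ioo 0 x, m s with hM
  have hFc : ContinuousOn F (Icc 0 p) := contL hhm
  have hMc : ContinuousOn M (Icc 0 p) := contL hm
  have hanti : ∀ x ∈ Ioo 0 p, ∀ y ∈ Ioo 0 p, x ≤ y → h y ≤ h x := by
    intro x hx y hy hxy
    have h1 := splitI (hwi.mono_set (Ioo_subset_Ioo_left hx.1.le)) hxy hy.2.le
    have h2 : 0 ≤ ∫ s in Ioo x y, w s := integral_nonneg fun _ => hw0 _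
    simp only [hh, hT]; linarith
  -- where `h ≥ 0` the integral over `(0,x)` has a nonnegative integrand; where `h ≤ 0` the mean-zero
  -- condition turns it into minus an integral of `h m` over `(x,p)`
  have hF0 : ∀ x ∈ Ioo 0 p, 0 ≤ F x := by
    intro x hx
    rcases le_total 0 (h x) with hx0 | hx0
    · refine setIntegral_nonneg measurableSet_Ioo fun s hs => ?_
      have hs' : s ∈ Ioo 0 p := ⟨hs.1, hs.2.trans hx.2⟩
      exact mul_nonneg (hx0.trans (hanti s hs' x hx hs.2.le)) (hm0 s hs').le
    · have h1 := splitI hhm hx.1.le hx.2.le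
      have h2 : (∫ s in Ioo x p, h s * m s) ≤ 0 :=
        setIntegral_nonpos measurableSet_Ioo fun s hs => by
          have hs' : s ∈ Ioo 0 p := ⟨hx.1.trans hs.1, hs.2⟩
          exact mul_nonpos_of_nonpos_of_nonneg ((hanti x hx s hs' hs.1.le).trans hx0) (hm0 s hs').le
      simp only [hF]; linarith
  have hFM : ∀ x ∈ Ioo 0 p, F x ≤ W * M x := by
    intro x hx
    have hsub : Ioo 0 x ⊆ Ioo 0 p := Ioo_subset_Ioo_right hx.2.le
    rw [hF, hM, ← integral_const_mul]
    refine setIntegral_mono_on (hhm.mono_set hsub) ((hm.mono_set hsub).const_mul _)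
      measurableSet_Ioo fun s hs => ?_
    exact mul_le_mul_of_nonneg_right (hhW s (hsub hs)) (hm0 s (hsub hs)).le
  set A := ∫ x in Ioo 0 p, F x ^ 2 * (E x)⁻¹ with hA
  have hA0 : 0 ≤ A := setIntegral_nonneg measurableSet_Ioo fun x hx =>
    mul_nonneg (sq_nonneg _) (hEip x hx).le
  have hV1 : V = ∫ x in Ioo 0 p, F x * w x := by
    rw [← fub hhm hwi]
    have : ∫ x in Ioo 0 p, (1 * (h x ^ 2 * m x) + c * (h x * m x) + 0 * m x) = V := by
      rw [lin3 (α := fun x => h x ^ 2 * m x) (intMul (hhc.pow 2) hm) hhm hm, hmean]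
      simp [hV]
    rw [← this]
    apply setIntegral_congr_fun measurableSet_Ioo
    intro x hx
    simp only [hh]; ring
  have hVA : V ^ 2 ≤ A * d := by
    rw [hV1]
    refine cs3 (intC ((hFc.pow 2).mul hEi)) (intMul hFc hwi) hw2 ?_
    filter_upwards [ae_restrict_mem measurableSet_Ioo] with x hx
    have := hE0 x (Ioo_subset_Icc_self hx)
    refine ⟨by positivity, by positivity, le_of_eq ?_⟩
    field_simp
  rcases hV0.eq_or_lt with hVz | hVp
  · rw [← hVz]; simpa using hd0
  have hdp : 0 < d := by
    rcases hd0.eq_or_lt with h | h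
    · rw [← h] at hVA; nlinarith
    · exact h
  have hAp : 0 < A := by
    rcases hA0.eq_or_lt with h | h
    · rw [← h] at hVA; nlinarith
    · exact h
  have hW0 : 0 ≤ W := integral_nonneg fun _ => hw0 _
  set σ := 1 / (4 * S * μ * l) with hσ
  have hσ0 : 0 < σ := by positivity
  -- `t` is proportional to `W` so that `σ F ≤ t M` follows from `F ≤ W M`
  set t := σ * W with ht
  have ht0 : 0 ≤ t := by positivity
  set v : ℝ → ℝ := fun x => (F x + t * M x) * (E x)⁻¹ with hv
  have hvc : ContinuousOn v (Icc 0 p) := (hFc.add (continuousOn_const.mul hMc)).mul hEi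
  have hvi := intC hvc
  have hte := htest v hvc
  set g : ℝ → ℝ := fun x => ∫ s in Ioo x p, v s with hg
  have hgc : ContinuousOn g (Icc 0 p) := contR hvi
  set B := ∫ x in Ioo 0 p, E x * v x ^ 2 with hB
  have hBi : IntegrableOn (fun x => E x * v x ^ 2) (Ioo 0 p) := intC (hE.mul (hvc.pow 2))
  have hkc : ContinuousOn (fun x => h x + t) (Icc 0 p) := hhc.add continuousOn_const
  have hBA : (1 + 2 * σ) * A ≤ B := by
    rw [hA, ← integral_const_mul]
    refine setIntegral_mono_on ((intC ((hFc.pow 2).mul hEi)).const_mul _) hBi measurableSet_Ioo ?_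
    intro x hx
    have hEx := hE0 x (Ioo_subset_Icc_self hx)
    have e : E x * v x ^ 2 = (F x + t * M x) ^ 2 * (E x)⁻¹ := by
      simp only [hv]; field_simp
    rw [e, ← mul_assoc]
    refine mul_le_mul_of_nonneg_right ?_ (inv_pos.2 hEx).le
    have h1 := hF0 x hx
    have h2 : σ * F x ≤ t * M x := by
      have := mul_le_mul_of_nonneg_left (hFM x hx) hσ0.le
      rw [ht]; linarith
    nlinarith [mul_le_mul_of_nonneg_left h2 h1, sq_nonneg (t * M x)]
  have hBP : B = ∫ x in Ioo 0 p, ((h x + t) * m x) * g x := by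
    rw [fub (intMul hkc hm) hvi]
    apply setIntegral_congr_fun measurableSet_Ioo
    intro x hx
    have hEx := hE0 x (Ioo_subset_Icc_self hx)
    have hsub : Ioo 0 x ⊆ Ioo 0 p := Ioo_subset_Ioo_right hx.2.le
    have : ∫ s in Ioo 0 x, (h s + t) * m s = F x + t * M x := by
      simp only [add_mul]
      rw [integral_add (hhm.mono_set hsub) ((hm.mono_set hsub).const_mul _), integral_const_mul]
    simp only [this, hv]; field_simp
  have hkk : ∫ x in Ioo 0 p, (h x + t) ^ 2 * m x = V + t ^ 2 * μ := by
    have : ∫ x in Ioo 0 p, (1 * (h x ^ 2 * m x) + (2 * t) * (h x * m x) + t ^ 2 * m x)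
        = V + t ^ 2 * μ := by
      rw [lin3 (α := fun x => h x ^ 2 * m x) (intMul (hhc.pow 2) hm) hhm hm, hmean]
      simp [hV, hμ]
    rw [← this]
    apply setIntegral_congr_fun measurableSet_Ioo
    intro x hx
    simp only; ring
  have hCS : B ^ 2 ≤ (V + t ^ 2 * μ) * ∫ x in Ioo 0 p, g x ^ 2 * m x := by
    rw [hBP, ← hkk]
    refine cs3 (intMul (hkc.pow 2) hm) ?_ (intMul (hgc.pow 2) hm) ?_
    · exact (intMul hgc (intMul hkc hm)).congr
        (Eventually.of_forall fun x => mul_comm _ _)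
    filter_upwards [ae_restrict_mem measurableSet_Ioo] with x hx
    have h1 := hm0 x hx
    exact ⟨by positivity, by positivity, le_of_eq (by ring)⟩
  have hBpos : 0 < B := lt_of_lt_of_le (by positivity) hBA
  have hlB : l * B ≤ V + t ^ 2 * μ := by
    have h2 : l * B ^ 2 ≤ (V + t ^ 2 * μ) * B := by
      calc l * B ^ 2 ≤ l * ((V + t ^ 2 * μ) * ∫ x in Ioo 0 p, g x ^ 2 * m x) := by gcongr
        _ = (V + t ^ 2 * μ) * (l * ∫ x in Ioo 0 p, g x ^ 2 * m x) := by ring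
        _ ≤ (V + t ^ 2 * μ) * B := by gcongr
    have h3 : (l * B) * B ≤ (V + t ^ 2 * μ) * B := by linarith
    exact le_of_mul_le_mul_right h3 hBpos
  have ht2 : t ^ 2 * μ ≤ σ ^ 2 * (S * d) * μ := by
    rw [ht, mul_pow]; gcongr
  exact alg2 hl hσ0 hS0 hμ0 hVp hd0 hVA hBA hlB ht2 hσ

/-! ### Weights and test functions -/

lemma ooI_ofReal {p : ℝ} (hp : 0 < p) : ooI (ENNReal.ofReal p) = Ioo 0 p := by
  ext x; simp only [ooI, mem_ofPred_eq, mem_Ioo, ENNReal.ofReal_lt_ofReal_iff hp]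

lemma ccI_ofReal {p : ℝ} (hp : 0 ≤ p) : ccI (ENNReal.ofReal p) = Icc 0 p := by
  ext x; simp only [ccI, mem_ofPred_eq, mem_Icc, ENNReal.ofReal_le_ofReal_iff hp]

lemma ooI_mono {p q : ℝ≥0∞} (h : p ≤ q) : ooI p ⊆ ooI q := fun _ hx => ⟨hx.1, hx.2.trans_le h⟩

lemma isOpen_ooI (q : ℝ≥0∞) : IsOpen (ooI q) :=
  (isOpen_Ioi (a := (0:ℝ))).inter (isOpen_Iio.preimage ENNReal.continuous_ofReal)

lemma Cf_cont {a b : ℝ → ℝ} {D : ℝ≥0∞} (hyp : Hyp a b D) {p : ℝ} (hp : 0 ≤ p)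
    (hpD : ENNReal.ofReal p ≤ D) : ContinuousOn (Cf a b) (Icc 0 p) :=
  contL (((hyp.2.2.2 p hp hpD).1).mono_set Ioo_subset_Icc_self)

lemma Cf_contO {a b : ℝ → ℝ} {D : ℝ≥0∞} (hyp : Hyp a b D) : ContinuousOn (Cf a b) (ooI D) := by
  intro x hx
  obtain ⟨r, -, hr1, hr2⟩ := ENNReal.lt_iff_exists_real_btwn.1 hx.2
  have hxr : x < r := by
    by_contra hc; exact absurd (ENNReal.ofReal_le_ofReal (not_lt.1 hc)) (not_le.2 hr1)
  exact ((Cf_cont hyp (hx.1.trans hxr).le hr2.le).continuousAt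
    (Icc_mem_nhds hx.1 hxr)).continuousWithinAt

lemma dens_aem {a b : ℝ → ℝ} {D q : ℝ≥0∞} (hyp : Hyp a b D) (hq : q ≤ D) :
    AEMeasurable (fun x => Real.exp (Cf a b x) / a x) (volume.restrict (ooI q)) :=
  (Real.measurable_exp.comp_aemeasurable (((Cf_contO hyp).mono (ooI_mono hq)).aemeasurable
    (isOpen_ooI q).measurableSet)).div hyp.1.aemeasurable

/-- Neither side of this identity needs `f` to be measurable. -/
lemma muL2_eq {a b : ℝ → ℝ} {D q : ℝ≥0∞} (hyp : Hyp a b D) (hq : q ≤ D) (f : ℝ → ℝ) :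
    muL2 a b q f = ∫⁻ x in ooI q, ENNReal.ofReal (f x ^ 2 * (Real.exp (Cf a b x) / a x)) := by
  unfold muL2 muM
  rw [lintegral_withDensity_eq_lintegral_mul_non_measurable₀ _ (dens_aem hyp hq).ennreal_ofReal
    (Eventually.of_forall fun _ => ENNReal.ofReal_lt_top)]
  refine lintegral_congr fun x => ?_
  rw [Pi.mul_apply, mul_comm, ENNReal.ofReal_mul (sq_nonneg _)]

lemma integral_muM {a b : ℝ → ℝ} {D : ℝ≥0∞} (hyp : Hyp a b D) {p : ℝ} (hp : 0 < p)
    (hq : ENNReal.ofReal p ≤ D) (f : ℝ → ℝ) :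
    ∫ x, f x ∂(muM a b (ENNReal.ofReal p)) =
      ∫ x in Ioo 0 p, f x * (Real.exp (Cf a b x) / a x) := by
  unfold muM
  rw [integral_withDensity_eq_integral_toReal_smul₀ (dens_aem hyp hq).ennreal_ofReal
    (Eventually.of_forall fun _ => ENNReal.ofReal_lt_top), ooI_ofReal hp]
  refine setIntegral_congr_fun measurableSet_Ioo fun x hx => ?_
  have h1 : 0 < a x := hyp.2.2.1 x (ooI_mono hq (by rwa [ooI_ofReal hp]))
  simp only [smul_eq_mul]
  rw [ENNReal.toReal_ofReal (div_nonneg (Real.exp_pos _).le h1.le), mul_comm]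

/-- Homogeneity removes the normalisation `μ(f²) = 1` from the definition of the ND eigenvalue.
Finiteness of `μ(f²)` is what makes the rescaling possible. -/
lemma lam0sub_mul_le {a b : ℝ → ℝ} {q : ℝ≥0∞} {f : ℝ → ℝ}
    (hf : C1C q f) (h1 : q ≠ ∞ → f q.toReal = 0) (h2 : q = ∞ → Tendsto f atTop (nhds 0))
    (hfin : muL2 a b q f ≠ ∞) : lam0sub a b q * muL2 a b q f ≤ Dform a b q f := by
  rcases eq_or_ne (muL2 a b q f) 0 with h0 | h0
  · rw [h0, mul_zero]; exact zero_le
  set N := (muL2 a b q f).toReal with hN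
  have hN0 : 0 < N := ENNReal.toReal_pos h0 hfin
  have hNe : muL2 a b q f = ENNReal.ofReal N := (ENNReal.ofReal_toReal hfin).symm
  set c := (Real.sqrt N)⁻¹ with hc
  have hc2 : c ^ 2 = N⁻¹ := by rw [hc, inv_pow, Real.sq_sqrt hN0.le]
  have hd : ∀ x, deriv (fun x => c * f x) x = c * deriv f x := fun x => deriv_const_mul_field c
  have hle : lam0sub a b q ≤ ENNReal.ofReal N⁻¹ * Dform a b q f := by
    apply sInf_le
    refine ⟨fun x => c * f x, ⟨continuousOn_const.mul hf.1, fun x hx => (hf.2.1 x hx).const_mul c,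
      ?_⟩, ?_, ?_, ?_, ?_⟩
    · rw [funext hd]; exact continuousOn_const.mul hf.2.2
    · have : muL2 a b q (fun x => c * f x) = ENNReal.ofReal N⁻¹ * muL2 a b q f := by
        unfold muL2
        rw [← lintegral_const_mul' _ _ ENNReal.ofReal_ne_top]
        refine lintegral_congr fun x => ?_
        rw [mul_pow, hc2, ENNReal.ofReal_mul (inv_pos.2 hN0).le]
      rw [this, hNe, ← ENNReal.ofReal_mul (inv_pos.2 hN0).le, inv_mul_cancel₀ hN0.ne',
        ENNReal.ofReal_one]
    · intro h; simp [h1 h]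
    · intro h; simpa using (h2 h).const_mul c
    · unfold Dform
      rw [← lintegral_const_mul' _ _ ENNReal.ofReal_ne_top]
      refine lintegral_congr fun x => ?_
      rw [hd, mul_pow, hc2, ← ENNReal.ofReal_mul (inv_pos.2 hN0).le]
      congr 1; ring
  calc lam0sub a b q * muL2 a b q f
      ≤ (ENNReal.ofReal N⁻¹ * Dform a b q f) * muL2 a b q f := by gcongr
    _ = (ENNReal.ofReal N⁻¹ * ENNReal.ofReal N) * Dform a b q f := by rw [hNe]; ring
    _ = Dform a b q f := by
      rw [← ENNReal.ofReal_mul (inv_pos.2 hN0).le, inv_mul_cancel₀ hN0.ne', ENNReal.ofReal_one,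
        one_mul]

lemma weight_facts {a b : ℝ → ℝ} {D : ℝ≥0∞} (hyp : Hyp a b D) {p : ℝ} (hp : 0 < p)
    (hpD : ENNReal.ofReal p ≤ D) :
    ContinuousOn (fun x => Real.exp (Cf a b x)) (Icc 0 p) ∧
    IntegrableOn (fun x => Real.exp (Cf a b x) / a x) (Ioo 0 p) ∧
    ∀ x ∈ Ioo 0 p, 0 < Real.exp (Cf a b x) / a x :=
  ⟨(Cf_cont hyp hp.le hpD).rexp, (hyp.2.2.2 p hp.le hpD).2.mono_set Ioo_subset_Icc_self,
    fun x hx => div_pos (Real.exp_pos _)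
      (hyp.2.2.1 x (ooI_mono hpD (by rwa [ooI_ofReal hp])))⟩

lemma muL2_real {a b : ℝ → ℝ} {D : ℝ≥0∞} (hyp : Hyp a b D) {p : ℝ} (hp : 0 < p)
    (hpD : ENNReal.ofReal p ≤ D) {f : ℝ → ℝ} (hf : ContinuousOn f (Icc 0 p)) :
    muL2 a b (ENNReal.ofReal p) f =
      ENNReal.ofReal (∫ x in Ioo 0 p, f x ^ 2 * (Real.exp (Cf a b x) / a x)) := by
  obtain ⟨-, h2, h3⟩ := weight_facts hyp hp hpD
  rw [muL2_eq hyp hpD, ooI_ofReal hp, ofReal_integral_eq_lintegral_ofReal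
    (f := fun x => f x ^ 2 * (Real.exp (Cf a b x) / a x)) (intMul (hf.pow 2) h2)]
  filter_upwards [ae_restrict_mem measurableSet_Ioo] with x hx
  exact mul_nonneg (sq_nonneg _) (h3 x hx).le

/-- Any `v` continuous on `[0,r]`, with `r = q` or `v r = 0`, gives the admissible test function
`x ↦ ∫_x^r v` for the ND eigenvalue on `(0,q)`: its derivative is `-v`, and it is continued by `0`
beyond `r`, which keeps it `C¹` when `v r = 0`. -/
lemma lam0sub_test {a b : ℝ → ℝ} {D q : ℝ≥0∞} (hyp : Hyp a b D) (hq : q ≤ D) {r : ℝ} (hr : 0 < r)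
    (hrq : ENNReal.ofReal r ≤ q) {v : ℝ → ℝ} (hv : ContinuousOn v (Icc 0 r))
    (hv0 : ENNReal.ofReal r = q ∨ v r = 0) :
    lam0sub a b q * ENNReal.ofReal
        (∫ x in Ioo 0 r, (∫ s in Ioo x r, v s) ^ 2 * (Real.exp (Cf a b x) / a x)) ≤
      ENNReal.ofReal (∫ x in Ioo 0 r, Real.exp (Cf a b x) * v x ^ 2) := by
  obtain ⟨hE, hm, hm0⟩ := weight_facts hyp hr (hrq.trans hq)
  -- the constant extension `w` of `v` makes the primitive differentiable on the whole line
  set w : ℝ → ℝ := fun s => v (max 0 (min s r)) with hw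
  have hwc : Continuous w := hv.comp_continuous (by fun_prop)
    fun x => ⟨le_max_left _ _, max_le hr.le (min_le_right _ _)⟩
  have hwv : ∀ s ∈ Icc 0 r, w s = v s := fun s hs => by
    simp only [hw, min_eq_left hs.2, max_eq_right hs.1]
  have hwr : ∀ s, r ≤ s → w s = v r := fun s hs => by
    simp only [hw, min_eq_right hs, max_eq_right hr.le]
  set g : ℝ → ℝ := fun x => ∫ s in x..r, w s with hg
  have hgd : ∀ x, HasDerivAt g (-w x) x := fun x =>
    intervalIntegral.integral_hasDerivAt_left (hwc.intervalIntegrable _ _)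
      hwc.stronglyMeasurable.stronglyMeasurableAtFilter hwc.continuousAt
  have hgd' : deriv g = fun x => -w x := funext fun x => (hgd x).deriv
  have hgc : Continuous g := continuous_iff_continuousAt.2 fun x => (hgd x).continuousAt
  have hgv : ∀ x ∈ Ioo 0 r, g x = ∫ s in Ioo x r, v s := by
    intro x hx
    rw [hg]; simp only
    rw [intervalIntegral.integral_of_le hx.2.le, integral_Ioc_eq_integral_Ioo]
    exact setIntegral_congr_fun measurableSet_Ioo fun s hs => hwv s ⟨hx.1.le.trans hs.1.le, hs.2.le⟩
  have hz : v r = 0 → ∀ x, r ≤ x → g x = 0 := by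
    intro h x hx
    have : ∫ s in x..r, w s = ∫ s in x..r, (0 : ℝ) :=
      intervalIntegral.integral_congr fun s hs => by
        rw [uIcc_of_ge hx] at hs
        simp only [hwr s hs.1, h]
    simp [hg, this]
  have hC : C1C q g := ⟨hgc.continuousOn, fun x _ => (hgd x).differentiableAt, by
    rw [hgd']; exact hwc.neg.continuousOn⟩
  have hb1 : q ≠ ∞ → g q.toReal = 0 := by
    intro hqt
    rcases hv0 with h | h
    · rw [← h, ENNReal.toReal_ofReal hr.le]; simp [hg]
    · apply hz h
      rw [← ENNReal.toReal_ofReal hr.le]; exact ENNReal.toReal_mono hqt hrq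
  have hb2 : q = ∞ → Tendsto g atTop (nhds 0) := by
    intro hqt
    have h : v r = 0 := hv0.resolve_left (by rw [hqt]; exact ENNReal.ofReal_ne_top)
    refine tendsto_const_nhds.congr' ?_
    filter_upwards [eventually_ge_atTop r] with x hx using (hz h x hx).symm
  have hsub : Ioo 0 r ⊆ ooI q := by rw [← ooI_ofReal hr]; exact ooI_mono hrq
  -- both integrands vanish on the part of `(0,q)` beyond `r`
  have hred : ∀ φ : ℝ → ℝ≥0∞, (v r = 0 → ∀ x, r ≤ x → φ x = 0) →
      ∫⁻ x in ooI q, φ x = ∫⁻ x in Ioo 0 r, φ x := by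
    intro φ hφ
    rw [← lintegral_indicator (isOpen_ooI q).measurableSet, ← lintegral_indicator measurableSet_Ioo]
    refine lintegral_congr fun x => ?_
    by_cases hx : x ∈ Ioo 0 r
    · rw [indicator_of_mem hx, indicator_of_mem (hsub hx)]
    · rw [indicator_of_notMem hx]
      by_cases hx' : x ∈ ooI q
      · rw [indicator_of_mem hx']
        have hxr : r ≤ x := by
          by_contra hc; exact hx ⟨hx'.1, not_le.1 hc⟩
        rcases hv0 with h | h
        · exact absurd (h ▸ hx'.2) (not_lt.2 (ENNReal.ofReal_le_ofReal hxr))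
        · exact hφ h x hxr
      · rw [indicator_of_notMem hx']
  have hM : muL2 a b q g = ENNReal.ofReal
      (∫ x in Ioo 0 r, (∫ s in Ioo x r, v s) ^ 2 * (Real.exp (Cf a b x) / a x)) := by
    rw [muL2_eq hyp hq, hred _ (fun h x hx => by simp [hz h x hx]),
      ofReal_integral_eq_lintegral_ofReal
        (f := fun x => (∫ s in Ioo x r, v s) ^ 2 * (Real.exp (Cf a b x) / a x))
        (intMul ((contR (intC hv)).pow 2) hm)]
    · exact setLIntegral_congr_fun measurableSet_Ioo fun x hx => by simp only [hgv x hx]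
    · filter_upwards [ae_restrict_mem measurableSet_Ioo] with x hx
      exact mul_nonneg (sq_nonneg _) (hm0 x hx).le
  have hDf : Dform a b q g = ENNReal.ofReal (∫ x in Ioo 0 r, Real.exp (Cf a b x) * v x ^ 2) := by
    unfold Dform
    rw [hgd', hred _ (fun h x hx => by simp [hwr x hx, h]),
      ofReal_integral_eq_lintegral_ofReal
        (f := fun x => Real.exp (Cf a b x) * v x ^ 2) (intC (hE.mul (hv.pow 2)))]
    · exact setLIntegral_congr_fun measurableSet_Ioo fun x hx => by
        simp only [hwv x (Ioo_subset_Icc_self hx), neg_sq]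
    · exact Eventually.of_forall fun x => mul_nonneg (Real.exp_pos _).le (sq_nonneg _)
  have := lam0sub_mul_le (a := a) (b := b) hC hb1 hb2 (by rw [hM]; exact ENNReal.ofReal_ne_top)
  rwa [hM, hDf] at this

/-- The explicit test function `∫_x^r (r - s) ds` shows that the infimum is over a set which
contains a finite value. -/
lemma lam0sub_ne_top {a b : ℝ → ℝ} {D q : ℝ≥0∞} (hyp : Hyp a b D) (hq : q ≤ D) {r : ℝ}
    (hr : 0 < r) (hrq : ENNReal.ofReal r ≤ q) : lam0sub a b q ≠ ∞ := by
  intro htop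
  obtain ⟨hE, hm, hm0⟩ := weight_facts hyp hr (hrq.trans hq)
  have hc : ContinuousOn (fun s => r - s) (Icc 0 r) := by fun_prop
  have h := lam0sub_test hyp hq hr hrq hc (Or.inr (sub_self r))
  have hpos : 0 < ∫ x in Ioo 0 r, (∫ s in Ioo x r, (r - s)) ^ 2 * (Real.exp (Cf a b x) / a x) := by
    refine posI hr (intMul ((contR (intC hc)).pow 2) hm) fun x hx => ?_
    have := posI hx.2 ((intC hc).mono_set (Ioo_subset_Ioo_left hx.1.le))
      (fun s hs => sub_pos.2 hs.2)
    have := hm0 x hx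
    positivity
  rw [htop, ENNReal.top_mul (ENNReal.ofReal_pos.2 hpos).ne'] at h
  exact ENNReal.ofReal_ne_top (top_le_iff.1 h)

lemma lam0sub_test_real {a b : ℝ → ℝ} {D q : ℝ≥0∞} (hyp : Hyp a b D) (hq : q ≤ D) {r : ℝ}
    (hr : 0 < r) (hrq : ENNReal.ofReal r ≤ q) {v : ℝ → ℝ} (hv : ContinuousOn v (Icc 0 r))
    (hv0 : ENNReal.ofReal r = q ∨ v r = 0) :
    (lam0sub a b q).toReal *
        (∫ x in Ioo 0 r, (∫ s in Ioo x r, v s) ^ 2 * (Real.exp (Cf a b x) / a x)) ≤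
      ∫ x in Ioo 0 r, Real.exp (Cf a b x) * v x ^ 2 := by
  obtain ⟨hE, hm, hm0⟩ := weight_facts hyp hr (hrq.trans hq)
  have h := lam0sub_test hyp hq hr hrq hv hv0
  rw [← ENNReal.ofReal_toReal (lam0sub_ne_top hyp hq hr hrq),
    ← ENNReal.ofReal_mul ENNReal.toReal_nonneg] at h
  exact (ENNReal.ofReal_le_ofReal_iff (integral_nonneg fun x => by positivity)).1 h

/-- A Dirichlet form which is not `∞` is given by a convergent Bochner integral. -/
lemma energy {a b : ℝ → ℝ} {D : ℝ≥0∞} (hyp : Hyp a b D) {p : ℝ} (hp : 0 < p)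
    (hpD : ENNReal.ofReal p ≤ D) {f : ℝ → ℝ} (hfin : Dform a b (ENNReal.ofReal p) f ≠ ∞) :
    IntegrableOn (fun x => |deriv f x| ^ 2 * Real.exp (Cf a b x)) (Ioo 0 p) ∧
    Dform a b (ENNReal.ofReal p) f =
      ENNReal.ofReal (∫ x in Ioo 0 p, |deriv f x| ^ 2 * Real.exp (Cf a b x)) := by
  obtain ⟨hE, hm, hm0⟩ := weight_facts hyp hp hpD
  have e : ∀ x, Real.exp (Cf a b x) * deriv f x ^ 2 = |deriv f x| ^ 2 * Real.exp (Cf a b x) :=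
    fun x => by rw [sq_abs, mul_comm]
  unfold Dform at hfin ⊢
  simp only [e, ooI_ofReal hp] at hfin ⊢
  have hnn : ∀ x, 0 ≤ |deriv f x| ^ 2 * Real.exp (Cf a b x) := fun x => by positivity
  have hi : IntegrableOn (fun x => |deriv f x| ^ 2 * Real.exp (Cf a b x)) (Ioo 0 p) := by
    refine (lintegral_ofReal_ne_top_iff_integrable ?_ (Eventually.of_forall hnn)).1 hfin
    exact ((measurable_deriv f).abs.pow_const 2).aestronglyMeasurable.mul
      ((hE.mono Ioo_subset_Icc_self).aestronglyMeasurable measurableSet_Ioo)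
  exact ⟨hi, (ofReal_integral_eq_lintegral_ofReal hi (Eventually.of_forall hnn)).symm⟩

/-- The increments of `f` are dominated by those of the decreasing function `x ↦ ∫_x^p |f'|`. -/
lemma osc {p : ℝ} (hp : 0 < p) {f : ℝ → ℝ} (hf : C1C (ENNReal.ofReal p) f)
    (hi : IntegrableOn (fun x => |deriv f x|) (Ioo 0 p)) {x y : ℝ} (hx : 0 ≤ x) (hxy : x ≤ y)
    (hy : y ≤ p) : |f y - f x| ≤ ∫ s in Ioo x y, |deriv f s| := by
  obtain ⟨h1, h2, -⟩ := hf
  rw [ccI_ofReal hp.le] at h1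
  rw [ooI_ofReal hp] at h2
  have hi' : IntegrableOn (deriv f) (Ioo x y) := by
    have := (hi.mono_set (Ioo_subset_Ioo hx hy))
    exact (integrable_norm_iff (measurable_deriv f).aestronglyMeasurable).1 this
  have := intervalIntegral.integral_eq_sub_of_hasDerivAt_of_le hxy
    (h1.mono (Icc_subset_Icc hx hy))
    (fun s hs => (h2 s ⟨hx.trans_lt hs.1, hs.2.trans_le hy⟩).hasDerivAt)
    ((intervalIntegrable_iff_integrableOn_Ioo_of_le hxy).2 hi')
  rw [← this, intervalIntegral.integral_of_le hxy, integral_Ioc_eq_integral_Ioo]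
  have h := norm_integral_le_integral_norm (μ := volume.restrict (Ioo x y)) (deriv f)
  simpa only [Real.norm_eq_abs] using h

/-- Replacing a normalised test function `f` by `T(x) = ∫_x^p |f'|` does not decrease the
`L²(μ)`-norm, because `|f| ≤ T` when `f p = 0`. -/
lemma one_le_norm_T {a b : ℝ → ℝ} {D : ℝ≥0∞} (hyp : Hyp a b D) {p : ℝ} (hp : 0 < p)
    (hpD : ENNReal.ofReal p ≤ D) {f : ℝ → ℝ} (hf : C1C (ENNReal.ofReal p) f)
    (hN : muL2 a b (ENNReal.ofReal p) f = 1) (hf0 : f p = 0)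
    (hfin : Dform a b (ENNReal.ofReal p) f ≠ ∞) :
    1 ≤ ∫ x in Ioo 0 p, (∫ s in Ioo x p, |deriv f s|) ^ 2 * (Real.exp (Cf a b x) / a x) := by
  obtain ⟨hE, hm, hm0⟩ := weight_facts hyp hp hpD
  obtain ⟨hi, -⟩ := energy hyp hp hpD hfin
  have hw := intW hE (fun x _ => Real.exp_pos _)
    (measurable_deriv f).abs.aestronglyMeasurable hi
  have hfc : ContinuousOn f (Icc 0 p) := by rw [← ccI_ofReal hp.le]; exact hf.1
  rw [muL2_real hyp hp hpD hfc, ENNReal.ofReal_eq_one] at hN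
  rw [← hN]
  refine setIntegral_mono_on (intMul (hfc.pow 2) hm) (intMul ((contR hw).pow 2) hm)
    measurableSet_Ioo fun x hx => ?_
  refine mul_le_mul_of_nonneg_right ?_ (hm0 x hx).le
  have := osc hp hf hw hx.1.le hx.2.le le_rfl
  rw [hf0, zero_sub, abs_neg] at this
  rw [← sq_abs]
  exact pow_le_pow_left₀ (abs_nonneg _) this 2

/-- Cauchy–Schwarz gives the bound `λ₀ ≥ 1 / (∫_0^p e^{-C} · μ(0,p))`. -/
lemma lam0sub_pos {a b : ℝ → ℝ} {D : ℝ≥0∞} (hyp : Hyp a b D) {p : ℝ} (hp : 0 < p)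
    (hpD : ENNReal.ofReal p ≤ D) : 0 < lam0sub a b (ENNReal.ofReal p) := by
  obtain ⟨hE, hm, hm0⟩ := weight_facts hyp hp hpD
  have hEi : ContinuousOn (fun x => (Real.exp (Cf a b x))⁻¹) (Icc 0 p) :=
    hE.inv₀ fun x _ => (Real.exp_pos _).ne'
  set S := ∫ x in Ioo 0 p, (Real.exp (Cf a b x))⁻¹ with hS
  set μ := ∫ x in Ioo 0 p, Real.exp (Cf a b x) / a x with hμ
  have hS0 : 0 < S := posI hp (intC hEi) fun x _ => inv_pos.2 (Real.exp_pos _)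
  have hμ0 : 0 < μ := posI hp hm hm0
  refine lt_of_lt_of_le (ENNReal.ofReal_pos.2 (inv_pos.2 (mul_pos hS0 hμ0))) (le_sInf ?_)
  rintro _ ⟨f, hf, hN, hf0, -, rfl⟩
  have hf0 := hf0 ENNReal.ofReal_ne_top
  rw [ENNReal.toReal_ofReal hp.le] at hf0
  by_cases hfin : Dform a b (ENNReal.ofReal p) f = ∞
  · rw [hfin]; exact le_top
  obtain ⟨hi, hd⟩ := energy hyp hp hpD hfin
  rw [hd]
  apply ENNReal.ofReal_le_ofReal
  have hwm : AEStronglyMeasurable (fun x => |deriv f x|) (volume.restrict (Ioo 0 p)) :=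
    (measurable_deriv f).abs.aestronglyMeasurable
  have hw := intW hE (fun x _ => Real.exp_pos _) hwm hi
  have hW := sqW hE (fun x _ => Real.exp_pos _) hwm hi
  have h1 := one_le_norm_T hyp hp hpD hf hN hf0 hfin
  have h2 : (∫ x in Ioo 0 p, (∫ s in Ioo x p, |deriv f s|) ^ 2 * (Real.exp (Cf a b x) / a x)) ≤
      ∫ x in Ioo 0 p, (∫ s in Ioo 0 p, |deriv f s|) ^ 2 * (Real.exp (Cf a b x) / a x) := by
    refine setIntegral_mono_on (intMul ((contR hw).pow 2) hm) (hm.const_mul _)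
      measurableSet_Ioo fun x hx => ?_
    refine mul_le_mul_of_nonneg_right ?_ (hm0 x hx).le
    obtain ⟨h3, h4⟩ := T_bd (fun s => abs_nonneg (deriv f s)) hw hx.1.le
    exact pow_le_pow_left₀ h3 h4 2
  rw [integral_const_mul] at h2
  rw [inv_le_iff_one_le_mul₀ (mul_pos hS0 hμ0)]
  nlinarith

/-! ### Strict monotonicity -/

/-- The ND eigenvalue on `(0,p)` exceeds the one on a longer interval by a definite factor.
A factor independent of the test function is needed because the infimum need not be attained. -/
lemma gap_ND {a b : ℝ → ℝ} {D q : ℝ≥0∞} (hyp : Hyp a b D) (hq : q ≤ D) {p : ℝ} (hp : 0 < p)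
    (hpq : ENNReal.ofReal p < q) :
    ∃ κ : ℝ, 0 < κ ∧ lam0sub a b q * ENNReal.ofReal (1 + κ) ≤ lam0sub a b (ENNReal.ofReal p) := by
  obtain ⟨r, -, hr1, hr2⟩ := ENNReal.lt_iff_exists_real_btwn.1 hpq
  have hpr : p < r := by
    by_contra hc; exact absurd (ENNReal.ofReal_le_ofReal (not_lt.1 hc)) (not_le.2 hr1)
  have hr := hp.trans hpr
  obtain ⟨hE, hm, hm0⟩ := weight_facts hyp hr (hr2.le.trans hq)
  have hpD := hpq.le.trans hq
  have hne := lam0sub_ne_top hyp hq hr hr2.le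
  have hEi : ContinuousOn (fun x => (Real.exp (Cf a b x))⁻¹) (Icc 0 r) :=
    hE.inv₀ fun x _ => (Real.exp_pos _).ne'
  refine ⟨(∫ x in Ioo p r, ((r - x) / (r - p)) ^ 2 / Real.exp (Cf a b x)) /
    ∫ x in Ioo 0 p, (Real.exp (Cf a b x))⁻¹, ?_, le_sInf ?_⟩
  · refine div_pos (posI hpr ?_ fun x hx => ?_)
      (posI hp (intC (hEi.mono (Icc_subset_Icc_right hpr.le))) fun x _ => inv_pos.2 (Real.exp_pos _))
    · have : ContinuousOn (fun x => ((r - x) / (r - p)) ^ 2 * (Real.exp (Cf a b x))⁻¹) (Icc 0 r) :=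
        ContinuousOn.mul (by fun_prop) hEi
      exact (intC this).mono_set (Ioo_subset_Ioo_left hp.le)
    · have h1 := sub_pos.2 hpr
      have h2 := sub_pos.2 hx.2
      positivity
  rintro _ ⟨f, hf, hN, hf0, -, rfl⟩
  have hf0 := hf0 ENNReal.ofReal_ne_top
  rw [ENNReal.toReal_ofReal hp.le] at hf0
  by_cases hfin : Dform a b (ENNReal.ofReal p) f = ∞
  · rw [hfin]; exact le_top
  obtain ⟨hi, hd⟩ := energy hyp hp hpD hfin
  have h1 := one_le_norm_T hyp hp hpD hf hN hf0 hfin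
  have hc := core1 (E := fun x => Real.exp (Cf a b x)) (m := fun x => Real.exp (Cf a b x) / a x)
    (w := fun x => |deriv f x|) (l := (lam0sub a b q).toReal)
    hp hpr hE (fun x _ => Real.exp_pos _) hm hm0
    (measurable_deriv f).abs.aestronglyMeasurable (fun _ => abs_nonneg _) hi ENNReal.toReal_nonneg
    (by linarith) (fun v hv hvr => lam0sub_test_real hyp hq hr hr2.le hv (Or.inr hvr))
  rw [hd, ← ENNReal.ofReal_toReal hne, ← ENNReal.ofReal_mul ENNReal.toReal_nonneg]
  apply ENNReal.ofReal_le_ofReal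
  refine le_trans ?_ hc
  refine mul_le_mul_of_nonneg_right ?_ ?_
  · exact le_mul_of_one_le_right ENNReal.toReal_nonneg h1
  · have : 0 ≤ (∫ x in Ioo p r, ((r - x) / (r - p)) ^ 2 / Real.exp (Cf a b x)) /
      ∫ x in Ioo 0 p, (Real.exp (Cf a b x))⁻¹ :=
      div_nonneg (integral_nonneg fun x => by positivity) (integral_nonneg fun x => by positivity)
    linarith

/-- The positivity of `y` covers the case `x = 0`, where the factor `1 + κ` gives nothing. -/
lemma lt_of_gap {x y : ℝ≥0∞} {κ : ℝ} (hκ : 0 < κ) (h : x * ENNReal.ofReal (1 + κ) ≤ y)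
    (hy : 0 < y) (hx : x ≠ ∞) : x < y := by
  rcases eq_or_ne x 0 with rfl | h0
  · exact hy
  refine lt_of_lt_of_le ?_ h
  calc x = x * 1 := (mul_one x).symm
    _ < x * ENNReal.ofReal (1 + κ) :=
      (ENNReal.mul_lt_mul_iff_right h0 hx).2 (by rw [ENNReal.one_lt_ofReal]; linarith)

lemma lam0sub_strict {a b : ℝ → ℝ} {D : ℝ≥0∞} (hyp : Hyp a b D) (p q : ℝ≥0∞) (hp : 0 < p)
    (hpq : p < q) (hq : q ≤ D) : lam0sub a b q < lam0sub a b p := by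
  have hpt : p ≠ ∞ := (hpq.trans_le le_top).ne
  have hp0 : 0 < p.toReal := ENNReal.toReal_pos hp.ne' hpt
  have e : ENNReal.ofReal p.toReal = p := ENNReal.ofReal_toReal hpt
  obtain ⟨κ, h1, h2⟩ := gap_ND hyp hq hp0 (by rwa [e])
  refine lt_of_gap h1 (by rwa [e] at h2) ?_ (lam0sub_ne_top hyp hq hp0 (by rw [e]; exact hpq.le))
  have := lam0sub_pos hyp hp0 (by rw [e]; exact hpq.le.trans hq)
  rwa [e] at this

/-! ### Comparison with the Neumann–Neumann eigenvalue -/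

/-- The NN eigenvalue exceeds the ND eigenvalue on the same interval by a definite factor. The
variance of `f` is at most that of `T(x) = ∫_x^p |f'|`, since by `osc` the increments of `f` are
dominated by those of `T`; the decreasing function `T` is then handled by `core2`. -/
lemma nn_gap {a b : ℝ → ℝ} {D : ℝ≥0∞} (hyp : Hyp a b D) {p : ℝ} (hp : 0 < p)
    (hpD : ENNReal.ofReal p ≤ D) :
    ∃ κ : ℝ, 0 < κ ∧ lam0sub a b (ENNReal.ofReal p) * ENNReal.ofReal (1 + κ) ≤ lam1NN a b p := by
  obtain ⟨hE, hm, hm0⟩ := weight_facts hyp hp hpD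
  have hne := lam0sub_ne_top hyp hpD hp le_rfl
  have hlpos : 0 < (lam0sub a b (ENNReal.ofReal p)).toReal :=
    ENNReal.toReal_pos (lam0sub_pos hyp hp hpD).ne' hne
  have hEi : ContinuousOn (fun x => (Real.exp (Cf a b x))⁻¹) (Icc 0 p) :=
    hE.inv₀ fun x _ => (Real.exp_pos _).ne'
  have hS0 : 0 < ∫ x in Ioo 0 p, (Real.exp (Cf a b x))⁻¹ :=
    posI hp (intC hEi) fun x _ => inv_pos.2 (Real.exp_pos _)
  have hμ0 : 0 < ∫ x in Ioo 0 p, Real.exp (Cf a b x) / a x := posI hp hm hm0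
  set l := (lam0sub a b (ENNReal.ofReal p)).toReal with hl
  refine ⟨min 1 (1 / (4 * (∫ x in Ioo 0 p, (Real.exp (Cf a b x))⁻¹) *
    (∫ x in Ioo 0 p, Real.exp (Cf a b x) / a x) * l)), lt_min one_pos (by positivity), le_sInf ?_⟩
  rintro _ ⟨f, hf, -, ⟨x₁, hx₁, y₁, hy₁, hxy⟩, rfl⟩
  have hfc : ContinuousOn f (Icc 0 p) := by rw [← ccI_ofReal hp.le]; exact hf.1
  by_cases hfin : Dform a b (ENNReal.ofReal p) f = ∞
  · rw [hfin, ENNReal.top_div_of_ne_top ENNReal.ofReal_ne_top]; exact le_top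
  obtain ⟨hi, hd⟩ := energy hyp hp hpD hfin
  have hwm : AEStronglyMeasurable (fun x => |deriv f x|) (volume.restrict (Ioo 0 p)) :=
    (measurable_deriv f).abs.aestronglyMeasurable
  have hw := intW hE (fun x _ => Real.exp_pos _) hwm hi
  have hW := sqW hE (fun x _ => Real.exp_pos _) hwm hi
  have hc := core2 (E := fun x => Real.exp (Cf a b x)) (m := fun x => Real.exp (Cf a b x) / a x)
    (w := fun x => |deriv f x|) (l := l)
    hp hE (fun x _ => Real.exp_pos _) hm hm0 hwm (fun _ => abs_nonneg _) hi hlpos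
    (fun v hv => lam0sub_test_real hyp hpD hp le_rfl hv (Or.inl rfl)) _ rfl
  set m : ℝ → ℝ := fun x => Real.exp (Cf a b x) / a x with hmd
  set T : ℝ → ℝ := fun x => ∫ s in Ioo x p, |deriv f s| with hT
  have hTc : ContinuousOn T (Icc 0 p) := contR hw
  set c := (∫ x in Ioo 0 p, T x * m x) / ∫ x in Ioo 0 p, m x with hcd
  set d := ∫ x in Ioo 0 p, |deriv f x| ^ 2 * Real.exp (Cf a b x) with hdd
  have hTdiff : ∀ x ∈ Icc 0 p, ∀ y ∈ Icc 0 p, x ≤ y → |f y - f x| ≤ T x - T y := by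
    intro x hx y hy h
    have h1 := osc hp hf hw hx.1 h hy.2
    have h2 := splitI (hw.mono_set (Ioo_subset_Ioo_left hx.1)) h hy.2
    simp only [hT]; linarith
  have hTabs : ∀ x ∈ Icc 0 p, ∀ y ∈ Icc 0 p, |f y - f x| ≤ |T y - T x| := by
    intro x hx y hy
    rcases le_total x y with h | h
    · rw [abs_sub_comm (T y)]; exact (hTdiff x hx y hy h).trans (le_abs_self _)
    · rw [abs_sub_comm (f y)]; exact (hTdiff y hy x hx h).trans (le_abs_self _)
  have hTb : ∀ x ∈ Icc 0 p, 0 ≤ T x ∧ T x ≤ T 0 :=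
    fun x hx => T_bd (fun s => abs_nonneg (deriv f s)) hw hx.1
  -- a nonconstant function has positive energy
  have hdpos : 0 < d := by
    have h1 : 0 < |f y₁ - f x₁| := abs_pos.2 (sub_ne_zero.2 hxy.symm)
    have h2 : |T y₁ - T x₁| ≤ T 0 := by
      have h3 := hTb _ hx₁
      have h4 := hTb _ hy₁
      rw [abs_le]; constructor <;> linarith
    have h3 : 0 < T 0 := h1.trans_le ((hTabs x₁ hx₁ y₁ hy₁).trans h2)
    have h4 : 0 < (∫ x in Ioo 0 p, (Real.exp (Cf a b x))⁻¹) * d := lt_of_lt_of_le (pow_pos h3 2) hW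
    exact pos_of_mul_pos_right h4 hS0.le
  -- a point where the rearranged function equals its mean
  have hcI : c ∈ Icc (T p) (T 0) := by
    have hTp : T p = 0 := by simp [hT]
    have hTm := intMul hTc hm
    rw [hTp]
    refine ⟨div_nonneg (setIntegral_nonneg measurableSet_Ioo fun x hx =>
      mul_nonneg (hTb x (Ioo_subset_Icc_self hx)).1 (hm0 x hx).le) hμ0.le, ?_⟩
    rw [hcd, div_le_iff₀ hμ0, ← integral_const_mul]
    exact setIntegral_mono_on hTm (hm.const_mul _) measurableSet_Ioo fun x hx =>
      mul_le_mul_of_nonneg_right (hTb x (Ioo_subset_Icc_self hx)).2 (hm0 x hx).le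
  obtain ⟨x₀, hx₀, hTx₀⟩ := intermediate_value_Icc' hp.le hTc hcI
  have hμe : (muM a b (ENNReal.ofReal p) Set.univ).toReal = ∫ x in Ioo 0 p, m x := by
    have := integral_muM hyp hp hpD (fun _ => (1:ℝ))
    simp only [integral_const, smul_eq_mul, mul_one, one_mul] at this
    exact this
  have hvar : (∫ x, f x ^ 2 ∂(muM a b (ENNReal.ofReal p))) -
        (∫ x, f x ∂(muM a b (ENNReal.ofReal p))) ^ 2 /
          (muM a b (ENNReal.ofReal p) Set.univ).toReal ≤ ∫ x in Ioo 0 p, (T x - c) ^ 2 * m x := by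
    rw [integral_muM hyp hp hpD, integral_muM hyp hp hpD, hμe]
    change (∫ x in Ioo 0 p, f x ^ 2 * m x) - (∫ x in Ioo 0 p, f x * m x) ^ 2 /
      (∫ x in Ioo 0 p, m x) ≤ _
    have h1 : (∫ x in Ioo 0 p, (f x - f x₀) ^ 2 * m x) ≤ ∫ x in Ioo 0 p, (T x - c) ^ 2 * m x := by
      refine setIntegral_mono_on (intMul ((hfc.sub continuousOn_const).pow 2) hm)
        (intMul ((hTc.sub continuousOn_const).pow 2) hm) measurableSet_Ioo fun x hx => ?_
      refine mul_le_mul_of_nonneg_right ?_ (hm0 x hx).le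
      rw [← hTx₀]
      exact sq_le_sq.2 (hTabs x₀ hx₀ x (Ioo_subset_Icc_self hx))
    have h2 : (∫ x in Ioo 0 p, (f x - f x₀) ^ 2 * m x) =
        1 * (∫ x in Ioo 0 p, f x ^ 2 * m x) + (-2 * f x₀) * (∫ x in Ioo 0 p, f x * m x)
          + f x₀ ^ 2 * ∫ x in Ioo 0 p, m x := by
      rw [← lin3 (α := fun x => f x ^ 2 * m x) (intMul (hfc.pow 2) hm) (intMul hfc hm) hm]
      exact setIntegral_congr_fun measurableSet_Ioo fun x _ => by ring
    refine le_trans ?_ h1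
    rw [h2]
    set I := ∫ x in Ioo 0 p, f x * m x
    set μ := ∫ x in Ioo 0 p, m x
    have h3 : 0 ≤ (I - f x₀ * μ) ^ 2 / μ := div_nonneg (sq_nonneg _) hμ0.le
    -- the variance is the least second moment about a constant, here about `f x₀`
    have h4 : (I - f x₀ * μ) ^ 2 / μ = I ^ 2 / μ - 2 * f x₀ * I + f x₀ ^ 2 * μ := by
      have := hμ0.ne'
      field_simp
      ring
    linarith
  rw [ENNReal.le_div_iff_mul_le (Or.inr (by rw [hd]; exact (ENNReal.ofReal_pos.2 hdpos).ne'))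
    (Or.inl ENNReal.ofReal_ne_top), hd, ← ENNReal.ofReal_toReal hne,
    ← ENNReal.ofReal_mul ENNReal.toReal_nonneg, ← ENNReal.ofReal_mul (by positivity)]
  apply ENNReal.ofReal_le_ofReal
  refine le_trans ?_ hc
  exact mul_le_mul_of_nonneg_left hvar (by positivity)

/-! ### Convergence -/

/-- A test function `f` on `(0,D)` restricts to the test functions `f - f(pₙ)` on `(0,pₙ)`, whose
energies do not exceed that of `f`; Fatou's lemma handles their `L²(μ)`-norms. -/
lemma lam0sub_tendsto {a b : ℝ → ℝ} {D : ℝ≥0∞} (hD : 0 < D) (hyp : Hyp a b D)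
    (pn : ℕ → ℝ) (h0 : ∀ n, 0 < pn n) (hlt : ∀ n, ENNReal.ofReal (pn n) < D)
    (hanti : StrictAnti (fun n => lam0sub a b (ENNReal.ofReal (pn n))))
    (hlim : Tendsto (fun n => ENNReal.ofReal (pn n)) atTop (nhds D)) :
    Tendsto (fun n => lam0sub a b (ENNReal.ofReal (pn n))) atTop (nhds (lam0sub a b D)) := by
  have hL := tendsto_atTop_iInf hanti.antitone
  set L := ⨅ n, lam0sub a b (ENNReal.ofReal (pn n)) with hLd
  have hle : lam0sub a b D ≤ L :=
    le_iInf fun n => (lam0sub_strict hyp _ _ (ENNReal.ofReal_pos.2 (h0 n)) (hlt n) le_rfl).le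
  suffices L ≤ lam0sub a b D by rwa [le_antisymm this hle] at hL
  have hLt : L ≠ ∞ := ne_top_of_le_ne_top (lam0sub_ne_top hyp (hlt 0).le (h0 0) le_rfl)
    (iInf_le _ 0)
  refine le_sInf ?_
  rintro _ ⟨f, hf, hN, hb1, hb2, rfl⟩
  -- the endpoint values tend to `0`
  have hfp : Tendsto (fun n => f (pn n)) atTop (nhds 0) := by
    rcases eq_or_ne D ∞ with rfl | hDt
    · refine (hb2 rfl).comp ?_
      exact ENNReal.tendsto_ofReal_nhds_top.1 hlim
    · rw [← hb1 hDt]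
      have h1 : Tendsto pn atTop (nhds D.toReal) := by
        have := (ENNReal.tendsto_toReal hDt).comp hlim
        refine this.congr fun n => ENNReal.toReal_ofReal (h0 n).le
      have h2 : D.toReal ∈ ccI D := ⟨ENNReal.toReal_nonneg, by rw [ENNReal.ofReal_toReal hDt]⟩
      exact (hf.1 _ h2).tendsto.comp (tendsto_nhdsWithin_iff.2
        ⟨h1, Eventually.of_forall fun n => ⟨(h0 n).le, (hlt n).le⟩⟩)
  set φ : ℕ → ℝ → ℝ≥0∞ := fun n => (Ioo 0 (pn n)).indicator fun x =>
    ENNReal.ofReal ((f x - f (pn n)) ^ 2 * (Real.exp (Cf a b x) / a x)) with hφ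
  have hkey : ∀ n, L * ∫⁻ x in ooI D, φ n x ≤ Dform a b D f := by
    intro n
    have hsub : Ioo 0 (pn n) ⊆ ooI D := by
      rw [← ooI_ofReal (h0 n)]; exact ooI_mono (hlt n).le
    have hCs : C1C (ENNReal.ofReal (pn n)) (fun x => f x - f (pn n)) := by
      refine ⟨(hf.1.mono fun x hx => ⟨hx.1, hx.2.trans (hlt n).le⟩).sub continuousOn_const,
        fun x hx => (hf.2.1 x (ooI_mono (hlt n).le hx)).sub_const _, ?_⟩
      simp only [deriv_sub_const_fun]
      exact hf.2.2.mono (ooI_mono (hlt n).le)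
    have hM := muL2_real hyp (h0 n) (hlt n).le (f := fun x => f x - f (pn n))
      (by rw [← ccI_ofReal (h0 n).le]; exact hCs.1)
    have h1 := lam0sub_mul_le (a := a) (b := b) hCs
      (fun _ => by simp [ENNReal.toReal_ofReal (h0 n).le])
      (fun h => absurd h ENNReal.ofReal_ne_top) (by rw [hM]; exact ENNReal.ofReal_ne_top)
    have h2 : ∫⁻ x in ooI D, φ n x = muL2 a b (ENNReal.ofReal (pn n)) (fun x => f x - f (pn n)) := by
      rw [muL2_eq hyp (hlt n).le, ooI_ofReal (h0 n), hφ]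
      simp only
      rw [setLIntegral_indicator measurableSet_Ioo, inter_eq_left.2 hsub]
    rw [h2]
    refine (mul_le_mul' (iInf_le (fun n => lam0sub a b (ENNReal.ofReal (pn n))) n) le_rfl).trans
      (h1.trans ?_)
    unfold Dform
    simp only [deriv_sub_const_fun]
    exact lintegral_mono_set (ooI_mono (hlt n).le)
  have hφm : ∀ n, AEMeasurable (φ n) (volume.restrict (ooI D)) := by
    intro n
    refine AEMeasurable.indicator ?_ measurableSet_Ioo
    refine (AEMeasurable.mul ?_ (dens_aem hyp le_rfl)).ennreal_ofReal
    have h1 : ContinuousOn f (ooI D) := hf.1.mono fun x hx => ⟨hx.1.le, hx.2.le⟩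
    exact ((h1.aemeasurable (isOpen_ooI D).measurableSet).sub_const _).pow_const 2
  have hfatou := lintegral_liminf_le' (u := atTop) hφm
  have hone : ∫⁻ x in ooI D, liminf (fun n => φ n x) atTop = 1 := by
    rw [← hN, muL2_eq hyp le_rfl]
    refine setLIntegral_congr_fun (isOpen_ooI D).measurableSet fun x hx => ?_
    apply Tendsto.liminf_eq
    have h1 : Tendsto (fun n => ENNReal.ofReal
        ((f x - f (pn n)) ^ 2 * (Real.exp (Cf a b x) / a x))) atTop
        (nhds (ENNReal.ofReal (f x ^ 2 * (Real.exp (Cf a b x) / a x)))) := by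
      apply ENNReal.tendsto_ofReal
      have := ((tendsto_const_nhds (x := f x)).sub hfp).pow 2
      rw [sub_zero] at this
      exact this.mul_const _
    refine h1.congr' ?_
    filter_upwards [hlim.eventually (lt_mem_nhds hx.2)] with n hn
    rw [hφ]; simp only
    rw [indicator_of_mem]
    exact ⟨hx.1, (ENNReal.ofReal_lt_ofReal_iff (h0 n)).1 hn⟩
  rw [hone] at hfatou
  by_contra hcon
  push Not at hcon
  have hL0 : L ≠ 0 := (pos_of_gt hcon).ne'
  have h1 : ∀ n, ∫⁻ x in ooI D, φ n x ≤ Dform a b D f / L := fun n => by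
    rw [ENNReal.le_div_iff_mul_le (Or.inl hL0) (Or.inl hLt), mul_comm]; exact hkey n
  have h2 : liminf (fun n => ∫⁻ x in ooI D, φ n x) atTop ≤ Dform a b D f / L := by
    refine (liminf_le_liminf (Eventually.of_forall h1)).trans ?_
    rw [liminf_const]
  have h3 := hfatou.trans h2
  rw [ENNReal.le_div_iff_mul_le (Or.inl hL0) (Or.inl hLt), one_mul] at h3
  exact absurd h3 (not_le.2 hcon)

/-- Lemma 3.3: monotonicity and convergence of the ND eigenvalues in the endpoint,
and comparison with the NN eigenvalue. -/
theorem nd_eigenvalue_monotonicity_comparison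
    (a b : ℝ → ℝ) (D : ℝ≥0∞) (hD : 0 < D) (hyp : Hyp a b D) :
    (∀ p q : ℝ≥0∞, 0 < p → p < q → q ≤ D → lam0sub a b q < lam0sub a b p) ∧
    (∀ pn : ℕ → ℝ, (∀ n, 0 < pn n) → (∀ n, ENNReal.ofReal (pn n) < D) →
      StrictMono pn →
      Tendsto (fun n => ENNReal.ofReal (pn n)) atTop (nhds D) →
      StrictAnti (fun n => lam0sub a b (ENNReal.ofReal (pn n))) ∧
      Tendsto (fun n => lam0sub a b (ENNReal.ofReal (pn n))) atTop
        (nhds (lam0sub a b D))) ∧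
    ∀ p : ℝ, 0 < p → ENNReal.ofReal p < D →
      lam0sub a b (ENNReal.ofReal p) < lam1NN a b p := by
  have hstrict := lam0sub_strict hyp
  refine ⟨hstrict, ?_, ?_⟩
  · intro pn h0 hlt hmono hlim
    have hanti : StrictAnti (fun n => lam0sub a b (ENNReal.ofReal (pn n))) := fun i j hij =>
      hstrict _ _ (ENNReal.ofReal_pos.2 (h0 i))
        ((ENNReal.ofReal_lt_ofReal_iff (h0 j)).2 (hmono hij)) (hlt j).le
    exact ⟨hanti, lam0sub_tendsto hD hyp pn h0 hlt hanti hlim⟩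
  · intro p hp hpD
    obtain ⟨κ, h1, h2⟩ := nn_gap hyp hp hpD.le
    have hne := lam0sub_ne_top hyp hpD.le hp le_rfl
    have hpos := lam0sub_pos hyp hp hpD.le
    refine lt_of_gap h1 h2 (lt_of_lt_of_le ?_ h2) hne
    exact ENNReal.mul_pos hpos.ne' (ENNReal.ofReal_pos.2 (by linarith)).ne'
end
end
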